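/- Let p ∈ [1, ∞), q ∈ [p, ∞), p_* := min{p, 2}, N ≥ 1, H ≥ 1. There is a numerical constant c > 0 such that: for every Φ-function Φ ∈ (aInc)_p ∩ (Dec)_q and every N-dimensional subspace X_N ⊂ C(Ω) with X_N ∈ NI_{2,∞}(H), if x₁, …, x_m are i.i.d. random points in Ω distributed according to μ, then E( sup_{f ∈ X_N^Φ} | (1/m)Σ_{j=1}^m Φ(|f(x_j)|) − ∫_Ω Φ(|f|) dμ | ) ≤ c(A + A^{1/2}), where A = (1/m)·q²·a_Φ(p_*)·(Φ(R_Φ(p_*)·H^{2/p_*})/H²)·E( ( Σ_{n ≤ ⌊log N⌋} 2^{n/2}·(e_n(X_N^{p_*}, ‖·‖_{∞,x}))^{p_*/2} )² ). -/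

import Mathlib

open MeasureTheory

noncomputable section

/-- The sup-norm (uniform norm) `‖f‖_∞ = sup_{x ∈ Ω} |f x|` of a real-valued function. -/
def supNorm {Ω : Type*} (f : Ω → ℝ) : ℝ := ⨆ x, |f x|

/-- The Luxemburg functional `‖f‖_Φ = inf {λ > 0 : ∫ Φ(|f|/λ) dμ ≤ 1}`. -/
def luxNorm {Ω : Type*} [MeasurableSpace Ω] (μ : Measure Ω) (Φ : ℝ → ℝ) (f : Ω → ℝ) : ℝ :=
  sInf {lam : ℝ | 0 < lam ∧ ∫ x, Φ (|f x| / lam) ∂μ ≤ 1}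

/-- The discrete Luxemburg functional `‖f‖_{Φ,x}` with respect to the uniform discrete
probability measure `(1/m) ∑_{j=1}^m δ_{x_j}`. -/
def discLuxNorm {Ω : Type*} (Φ : ℝ → ℝ) {m : ℕ} (x : Fin m → Ω) (f : Ω → ℝ) : ℝ :=
  sInf {lam : ℝ | 0 < lam ∧ (∑ j, Φ (|f (x j)| / lam)) / (m : ℝ) ≤ 1}

/-- The weighted discrete Luxemburg functional `‖f‖_{Φ,x,λ}` with respect to the discrete
probability measure `∑_{j=1}^m λ_j δ_{x_j}`. -/
def wDiscLuxNorm {Ω : Type*} (Φ : ℝ → ℝ) {m : ℕ} (x : Fin m → Ω) (w : Fin m → ℝ)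
    (f : Ω → ℝ) : ℝ :=
  sInf {lam : ℝ | 0 < lam ∧ (∑ j, w j * Φ (|f (x j)| / lam)) ≤ 1}

/-- `Φ : [0,∞) → [0,∞)` is a Φ-prefunction: increasing, `Φ(0) = 0`, `Φ(0+) = 0`,
`Φ(∞) = ∞` (stated for a function on `ℝ`, with the relevant conditions on `[0,∞)`). -/
structure IsPhiPrefun (Φ : ℝ → ℝ) : Prop where
  mono : MonotoneOn Φ (Set.Ici 0)
  map_zero : Φ 0 = 0
  nonneg : ∀ t : ℝ, 0 ≤ t → 0 ≤ Φ t
  tendsto_zero : Filter.Tendsto Φ (nhdsWithin 0 (Set.Ioi 0)) (nhds 0)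
  tendsto_atTop : Filter.Tendsto Φ Filter.atTop Filter.atTop

/-- `Φ ∈ (aInc)_p` with constant `a`: `t ↦ Φ(t) t^{-p}` is almost increasing on `(0,∞)`. -/
def AIncP (Φ : ℝ → ℝ) (p a : ℝ) : Prop :=
  ∀ s t : ℝ, 0 < s → s < t → Φ s / s ^ p ≤ a * (Φ t / t ^ p)

/-- `Φ ∈ (Inc)_p` : `t ↦ Φ(t) t^{-p}` is increasing on `(0,∞)`. -/
def IncP (Φ : ℝ → ℝ) (p : ℝ) : Prop :=
  ∀ s t : ℝ, 0 < s → s < t → Φ s / s ^ p ≤ Φ t / t ^ p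

/-- `Φ ∈ (Dec)_q` : `t ↦ Φ(t) t^{-q}` is decreasing on `(0,∞)`. -/
def DecQ (Φ : ℝ → ℝ) (q : ℝ) : Prop :=
  ∀ s t : ℝ, 0 < s → s < t → Φ t / t ^ q ≤ Φ s / s ^ q

/-- `Φ ∈ (aDec)_q` with constant `b`: `t ↦ Φ(t) t^{-q}` is almost decreasing on `(0,∞)`. -/
def ADecQ (Φ : ℝ → ℝ) (q b : ℝ) : Prop :=
  ∀ s t : ℝ, 0 < s → s < t → Φ t / t ^ q ≤ b * (Φ s / s ^ q)

/-- `t ↦ Φ(t) t^{-p}` is almost increasing with constant `a` on `(t_*, ∞)`. -/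
def AIncPOn (Φ : ℝ → ℝ) (p a tstar : ℝ) : Prop :=
  ∀ s t : ℝ, tstar < s → s < t → Φ s / s ^ p ≤ a * (Φ t / t ^ p)

/-- `t ↦ Φ(t) t^{-q}` is almost decreasing with constant `b` on `(t_*, ∞)`. -/
def ADecQOn (Φ : ℝ → ℝ) (q b tstar : ℝ) : Prop :=
  ∀ s t : ℝ, tstar < s → s < t → Φ t / t ^ q ≤ b * (Φ s / s ^ q)

/-- Entropy numbers `e_n(F, d)` of a set `F` with respect to a distance-like function `dd`:
the infimum of `ε > 0` such that `F` can be covered by `2^{2^n}` (one, for `n = 0`)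
`ε`-balls centered in `F`. -/
def entropyNumD {X : Type*} (dd : X → X → ℝ) (F : Set X) (n : ℕ) : ℝ :=
  sInf {ε : ℝ | 0 < ε ∧ ∃ T : Finset X, ↑T ⊆ F ∧
    T.card ≤ (if n = 0 then 1 else 2 ^ 2 ^ n) ∧ ∀ f ∈ F, ∃ g ∈ T, dd f g < ε}

/-- Sampling numbers `ϱ_m(F, ‖·‖)`: recovery by linear methods from samples at `m` points. -/
def sampNum {Ω : Type*} (nrm : (Ω → ℝ) → ℝ) (F : Set (Ω → ℝ)) (m : ℕ) : ℝ :=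
  sInf {r : ℝ | ∃ (x : Fin m → Ω) (T : (Fin m → ℝ) →ₗ[ℝ] (Ω → ℝ)),
    r = ⨆ f ∈ F, nrm (fun y => f y - T (fun j => f (x j)) y)}

/-- Modified sampling numbers `ϱ*_m(F, ‖·‖)`: recovery by arbitrary methods mapping into a
subspace of dimension at most `m`, from samples at `m` points. -/
def sampNumStar {Ω : Type*} (nrm : (Ω → ℝ) → ℝ) (F : Set (Ω → ℝ)) (m : ℕ) : ℝ :=
  sInf {r : ℝ | ∃ (x : Fin m → Ω) (Y : Submodule ℝ (Ω → ℝ)), Module.finrank ℝ Y ≤ m ∧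
    ∃ T : (Fin m → ℝ) → Ω → ℝ, (∀ v, T v ∈ Y) ∧
    r = ⨆ f ∈ F, nrm (fun y => f y - T (fun j => f (x j)) y)}

/-- Kolmogorov width `d_N(F, ‖·‖_∞)` : infimum over `N`-dimensional subspaces of `C(Ω)` of the
worst-case best approximation error in the uniform norm. -/
def kolWidth {Ω : Type*} [TopologicalSpace Ω] (F : Set (Ω → ℝ)) (N : ℕ) : ℝ :=
  sInf {r : ℝ | ∃ X : Submodule ℝ (Ω → ℝ), Module.finrank ℝ X = N ∧
    (∀ u ∈ X, Continuous u) ∧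
    r = ⨆ f ∈ F, sInf ((fun u => supNorm (fun y => f y - u y)) '' (X : Set (Ω → ℝ)))}


end
open MeasureTheory

noncomputable section

/-- Sign attached to a Boolean. -/
def sgnB (b : Bool) : ℝ := if b then 1 else -1

/-- Average over all sign patterns. -/
def rav {m : ℕ} (F : (Fin m → Bool) → ℝ) : ℝ := (∑ s, F s) / 2 ^ m

lemma rav_mono {m : ℕ} {F G : (Fin m → Bool) → ℝ} (h : ∀ s, F s ≤ G s) : rav F ≤ rav G := by
  unfold rav; gcongr; exact h _

lemma rav_add {m : ℕ} (F G : (Fin m → Bool) → ℝ) :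
    rav (fun s => F s + G s) = rav F + rav G := by
  unfold rav; rw [Finset.sum_add_distrib, add_div]

lemma rav_const {m : ℕ} (c : ℝ) : rav (fun _ : Fin m → Bool => c) = c := by
  unfold rav; simp

lemma rav_mul_left {m : ℕ} (c : ℝ) (F : (Fin m → Bool) → ℝ) :
    rav (fun s => c * F s) = c * rav F := by
  unfold rav; rw [← Finset.mul_sum, mul_div_assoc]

lemma rav_sum {m : ℕ} {β : Type*} (T : Finset β) (F : β → (Fin m → Bool) → ℝ) :
    rav (fun s => ∑ t ∈ T, F t s) = ∑ t ∈ T, rav (F t) := by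
  unfold rav; rw [Finset.sum_comm, Finset.sum_div]

lemma rav_mgf {m : ℕ} (a : Fin m → ℝ) :
    rav (fun s => Real.exp (∑ j, sgnB (s j) * a j)) ≤ Real.exp ((∑ j, a j ^ 2) / 2) := by
  have h1 : ∑ s : Fin m → Bool, Real.exp (∑ j, sgnB (s j) * a j)
      = ∏ j, (2 * Real.cosh (a j)) := by
    have : ∀ j, 2 * Real.cosh (a j) = ∑ b : Bool, Real.exp (sgnB b * a j) := by
      intro j; simp [sgnB, Real.cosh_eq]; ring
    simp_rw [this, Finset.prod_univ_sum, Real.exp_sum, Fintype.piFinset_univ]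
  unfold rav
  rw [h1, Finset.prod_mul_distrib]
  simp only [Finset.prod_const, Finset.card_univ, Fintype.card_fin]
  rw [mul_div_cancel_left₀ _ (by positivity), Finset.sum_div, Real.exp_sum]
  exact Finset.prod_le_prod (fun j _ => (Real.cosh_pos _).le)
    (fun j _ => Real.cosh_le_exp_half_sq _)

lemma rav_max {m : ℕ} {β : Type*} (T : Finset β) (a : β → Fin m → ℝ) (D : ℝ) (hD : 0 ≤ D)
    (ha : ∀ t ∈ T, ∑ j, a t j ^ 2 ≤ D ^ 2) (b : ℕ) (hT : T.card ≤ 2 ^ b)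
    (M : (Fin m → Bool) → ℝ) (hM : ∀ s, ∃ t ∈ T, M s ≤ |∑ j, sgnB (s j) * a t j|) :
    rav M ≤ D * Real.sqrt (2 * (b + 1)) := by
  rcases hD.eq_or_lt with h0 | hpos
  · have : ∀ s, M s ≤ 0 := by
      intro s
      obtain ⟨t, ht, h⟩ := hM s
      have h2 := ha t ht
      rw [← h0] at h2
      have h3 : ∑ j, a t j ^ 2 = 0 := le_antisymm (by simpa using h2)
        (Finset.sum_nonneg fun _ _ => sq_nonneg _)
      rw [Finset.sum_eq_zero_iff_of_nonneg (fun _ _ => sq_nonneg _)] at h3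
      have : ∀ j, a t j = 0 := fun j => by simpa using h3 j (Finset.mem_univ _)
      simpa [this] using h
    rw [← h0, zero_mul]
    calc rav M ≤ rav (fun _ => 0) := rav_mono this
      _ = 0 := rav_const 0
  set L := Real.sqrt (2 * (b + 1)) with hL
  have hL2 : L ^ 2 = 2 * (b + 1) := Real.sq_sqrt (by positivity)
  have hLpos : 0 < L := Real.sqrt_pos.2 (by positivity)
  set l := L / D with hl
  have hlpos : 0 < l := by positivity
  set B : ℝ := 2 * 2 ^ b * Real.exp (L ^ 2 / 2) with hB
  have hBpos : 0 < B := by positivity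
  have key : ∀ s, l * M s ≤ Real.log B - 1 + B⁻¹ * ∑ t ∈ T,
      (Real.exp (∑ j, sgnB (s j) * (l * a t j)) + Real.exp (∑ j, sgnB (s j) * (-l * a t j))) := by
    intro s
    obtain ⟨t, ht, h⟩ := hM s
    have e1 : Real.exp (l * M s) ≤ ∑ t ∈ T,
      (Real.exp (∑ j, sgnB (s j) * (l * a t j)) + Real.exp (∑ j, sgnB (s j) * (-l * a t j))) := by
      refine le_trans ?_ (Finset.single_le_sum (f := fun t =>
        (Real.exp (∑ j, sgnB (s j) * (l * a t j)) + Real.exp (∑ j, sgnB (s j) * (-l * a t j))))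
        (fun t _ => by positivity) ht)
      have r1 : ∑ j, sgnB (s j) * (l * a t j) = l * ∑ j, sgnB (s j) * a t j := by
        rw [Finset.mul_sum]; exact Finset.sum_congr rfl fun _ _ => by ring
      have r2 : ∑ j, sgnB (s j) * (-l * a t j) = l * -∑ j, sgnB (s j) * a t j := by
        rw [← Finset.sum_neg_distrib, Finset.mul_sum]
        exact Finset.sum_congr rfl fun _ _ => by ring
      simp only [r1, r2]
      rcases abs_cases (∑ j, sgnB (s j) * a t j) with ⟨h', _⟩ | ⟨h', _⟩ <;> rw [h'] at h
      · have := Real.exp_le_exp.2 (mul_le_mul_of_nonneg_left h hlpos.le)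
        linarith [Real.exp_pos (l * -∑ j, sgnB (s j) * a t j)]
      · have := Real.exp_le_exp.2 (mul_le_mul_of_nonneg_left h hlpos.le)
        linarith [Real.exp_pos (l * ∑ j, sgnB (s j) * a t j)]
    have e2 := Real.log_le_sub_one_of_pos (x := B⁻¹ * Real.exp (l * M s)) (by positivity)
    rw [Real.log_mul (by positivity) (by positivity), Real.log_inv, Real.log_exp] at e2
    have := mul_le_mul_of_nonneg_left e1 (inv_pos.2 hBpos).le
    linarith
  have h1 := rav_mono key
  rw [rav_mul_left, rav_add, rav_const, rav_mul_left, rav_sum] at h1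
  have h2 : ∀ t ∈ T, rav (fun s => (Real.exp (∑ j, sgnB (s j) * (l * a t j)) +
      Real.exp (∑ j, sgnB (s j) * (-l * a t j)))) ≤ 2 * Real.exp (L ^ 2 / 2) := by
    intro t ht
    rw [rav_add]
    have hx : l ^ 2 * ∑ j, a t j ^ 2 ≤ L ^ 2 := by
      calc l ^ 2 * ∑ j, a t j ^ 2 ≤ l ^ 2 * D ^ 2 := by gcongr; exact ha t ht
        _ = L ^ 2 := by rw [hl]; field_simp
    have g : ∀ c : ℝ, c ^ 2 = l ^ 2 → rav (fun s => Real.exp (∑ j, sgnB (s j) * (c * a t j)))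
        ≤ Real.exp (L ^ 2 / 2) := by
      intro c hc
      refine (rav_mgf (fun j => c * a t j)).trans (Real.exp_le_exp.2 ?_)
      simp_rw [mul_pow, hc, ← Finset.mul_sum]
      linarith
    linarith [g l rfl, g (-l) (by ring)]
  have h3 := Finset.sum_le_card_nsmul _ _ _ h2
  have h4 : B⁻¹ * ∑ t ∈ T, rav (fun s => (Real.exp (∑ j, sgnB (s j) * (l * a t j)) +
      Real.exp (∑ j, sgnB (s j) * (-l * a t j)))) ≤ 1 := by
    rw [inv_mul_le_iff₀ hBpos, mul_one]
    refine h3.trans ?_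
    rw [nsmul_eq_mul, hB]
    have : (T.card : ℝ) ≤ 2 ^ b := by exact_mod_cast hT
    nlinarith [Real.exp_pos (L ^ 2 / 2)]
  have h5 : Real.log B ≤ L ^ 2 := by
    rw [hB, Real.log_mul (by positivity) (by positivity), Real.log_exp,
      Real.log_mul (by positivity) (by positivity), Real.log_pow, hL2]
    have := Real.log_two_lt_d9
    have hb : (0:ℝ) ≤ b := Nat.cast_nonneg b
    nlinarith
  have h6 : l * rav M ≤ L ^ 2 := by linarith
  have h7 : L ^ 2 = l * (D * L) := by rw [hl]; field_simp
  rw [h7] at h6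
  exact le_of_mul_le_mul_left h6 hlpos

/-- Chaining bound. -/
lemma chaining {m : ℕ} (S : Set (Fin m → ℝ)) (φ : (Fin m → ℝ) → (Fin m → ℝ))
    (h0S : 0 ∈ S) (hφ0 : φ 0 = 0) (D α : ℝ) (hD : 0 ≤ D) (hα : 0 ≤ α) (hα1 : α ≤ 1)
    (hinc : ∀ u ∈ S, ∀ v ∈ S, ∑ j, (φ u j - φ v j) ^ 2 ≤ (D * ‖u - v‖ ^ α) ^ 2)
    (T : ℕ → Finset (Fin m → ℝ)) (r : ℕ → ℝ) (b : ℕ → ℕ)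
    (hT0 : T 0 = {0}) (hTS : ∀ k, ↑(T k) ⊆ S) (hTc : ∀ k, (T k).card ≤ 2 ^ b k)
    (hr : ∀ k, 0 ≤ r k)
    (hnet : ∀ k, ∀ v ∈ S, ∃ t ∈ T k, ‖v - t‖ ≤ r k) (L : ℕ) :
    rav (fun s => ⨆ v : S, |∑ j, sgnB (s j) * φ v j|) ≤
      D * (∑ k ∈ Finset.range L, (r k ^ α + r (k + 1) ^ α) *
        Real.sqrt (2 * (b k + b (k + 1) + 1))) + Real.sqrt m * D * r L ^ α := by
  classical
  have : Nonempty S := ⟨⟨0, h0S⟩⟩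
  choose! π hπT hπ using hnet
  have hrp : ∀ k, 0 ≤ r k ^ α := fun k => Real.rpow_nonneg (hr k) _
  set P : ℕ → Finset ((Fin m → ℝ) × (Fin m → ℝ)) := fun k =>
    ((T k) ×ˢ (T (k+1))).filter (fun z => ‖z.2 - z.1‖ ≤ r k + r (k+1)) with hP
  have hmem : ∀ k, ∀ v ∈ S, (π k v, π (k+1) v) ∈ P k := by
    intro k v hv
    simp only [hP, Finset.mem_filter, Finset.mem_product]
    refine ⟨⟨hπT k v hv, hπT _ v hv⟩, ?_⟩
    have h1 := hπ k v hv
    have h2 := hπ (k+1) v hv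
    calc ‖π (k+1) v - π k v‖ = ‖(v - π k v) - (v - π (k+1) v)‖ := by congr 1; abel
      _ ≤ _ := (norm_sub_le _ _).trans (by linarith)
  have hne : ∀ k, (P k).Nonempty := fun k => ⟨_, hmem k 0 h0S⟩
  set M : ℕ → (Fin m → Bool) → ℝ := fun k s => (P k).sup' (hne k)
    (fun z => |∑ j, sgnB (s j) * (φ z.2 j - φ z.1 j)|) with hMdef
  have hMk : ∀ k, rav (M k) ≤ D * (r k ^ α + r (k + 1) ^ α) *
        Real.sqrt (2 * (b k + b (k + 1) + 1)) := by
    intro k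
    have := rav_max (P k) (fun z j => φ z.2 j - φ z.1 j) (D * (r k ^ α + r (k + 1) ^ α))
      (mul_nonneg hD (add_nonneg (hrp _) (hrp _))) ?_ (b k + b (k+1)) ?_ (M k) ?_
    · push_cast at this; exact this
    · intro z hz
      simp only [hP, Finset.mem_filter, Finset.mem_product] at hz
      refine (hinc z.2 (hTS _ hz.1.2) z.1 (hTS _ hz.1.1)).trans ?_
      gcongr
      refine (Real.rpow_le_rpow (norm_nonneg _) hz.2 hα).trans ?_
      exact Real.rpow_add_le_add_rpow (hr _) (hr _) hα hα1
    · refine (Finset.card_filter_le _ _).trans ?_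
      rw [Finset.card_product, pow_add]
      exact Nat.mul_le_mul (hTc _) (hTc _)
    · intro s
      obtain ⟨z, hz, h⟩ := Finset.exists_mem_eq_sup' (hne k)
        (fun z : (Fin m → ℝ) × (Fin m → ℝ) => |∑ j, sgnB (s j) * (φ z.2 j - φ z.1 j)|)
      exact ⟨z, hz, h.le⟩
  have hsg : ∀ b : Bool, sgnB b ^ 2 = 1 := by intro b; cases b <;> simp [sgnB]
  have hpt : ∀ s, (⨆ v : S, |∑ j, sgnB (s j) * φ v j|) ≤
      (∑ k ∈ Finset.range L, M k s) + Real.sqrt m * D * r L ^ α := by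
    intro s
    refine ciSup_le ?_
    rintro ⟨v, hv⟩
    have hchain : ∀ n, |∑ j, sgnB (s j) * φ (π n v) j| ≤ ∑ k ∈ Finset.range n, M k s := by
      intro n
      induction n with
      | zero =>
        have : π 0 v = 0 := by have := hπT 0 v hv; rw [hT0] at this; simpa using this
        simp [this, hφ0]
      | succ n ih =>
        rw [Finset.sum_range_succ]
        have h1 : |∑ j, sgnB (s j) * (φ (π (n+1) v) j - φ (π n v) j)| ≤ M n s :=
          Finset.le_sup' (fun z : (Fin m → ℝ) × (Fin m → ℝ) =>
            |∑ j, sgnB (s j) * (φ z.2 j - φ z.1 j)|) (hmem n v hv)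
        have h2 : ∑ j, sgnB (s j) * φ (π (n+1) v) j = ∑ j, sgnB (s j) * φ (π n v) j +
          ∑ j, sgnB (s j) * (φ (π (n+1) v) j - φ (π n v) j) := by
          rw [← Finset.sum_add_distrib]; exact Finset.sum_congr rfl fun _ _ => by ring
        rw [h2]
        exact (abs_add_le _ _).trans (add_le_add ih h1)
    have h2 : ∑ j, sgnB (s j) * φ v j = ∑ j, sgnB (s j) * φ (π L v) j +
          ∑ j, sgnB (s j) * (φ v j - φ (π L v) j) := by
          rw [← Finset.sum_add_distrib]; exact Finset.sum_congr rfl fun _ _ => by ring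
    have h3 : |∑ j, sgnB (s j) * (φ v j - φ (π L v) j)| ≤ Real.sqrt m * D * r L ^ α := by
      refine abs_le_of_sq_le_sq ?_ (mul_nonneg (mul_nonneg (Real.sqrt_nonneg _) hD) (hrp _))
      refine (Finset.sum_mul_sq_le_sq_mul_sq _ _ _).trans ?_
      simp_rw [hsg]
      have := hinc v hv _ (hTS L (hπT L v hv))
      have h5 : ‖v - π L v‖ ^ α ≤ r L ^ α := Real.rpow_le_rpow (norm_nonneg _) (hπ L v hv) hα
      have h4 : (D * ‖v - π L v‖ ^ α) ^ 2 ≤ (D * r L ^ α) ^ 2 := by gcongr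
      rw [mul_assoc, mul_pow, Real.sq_sqrt (Nat.cast_nonneg _)]
      simp only [Finset.sum_const, Finset.card_univ, Fintype.card_fin, nsmul_eq_mul, mul_one]
      gcongr
      exact this.trans h4
    show |∑ j, sgnB (s j) * φ v j| ≤ _
    rw [h2]
    exact (abs_add_le _ _).trans (add_le_add (hchain L) h3)
  refine (rav_mono hpt).trans ?_
  rw [rav_add, rav_const, rav_sum, Finset.mul_sum]
  gcongr with k hk
  rw [← mul_assoc]
  exact hMk k

end
open MeasureTheory

noncomputable section

lemma half_cover_unit (E : Type*) [NormedAddCommGroup E] [NormedSpace ℝ E] [FiniteDimensional ℝ E] :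
    ∃ s : Finset E, s.card ≤ 5 ^ Module.finrank ℝ E ∧ ∀ v : E, ‖v‖ ≤ 2 → ∃ t ∈ s, ‖v - t‖ ≤ 1 := by
  classical
  set P : ℕ → Prop := fun n => ∃ s : Finset E, s.card = n ∧ (∀ c ∈ s, ‖c‖ ≤ 2) ∧
    (∀ c ∈ s, ∀ d ∈ s, c ≠ d → 1 ≤ ‖c - d‖) with hP
  have h0 : P 0 := ⟨∅, by simp, by simp, by simp⟩
  have hspec := Nat.findGreatest_spec (P := P) (Nat.zero_le (5 ^ Module.finrank ℝ E)) h0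
  have hle : ∀ n, P n → n ≤ Nat.findGreatest P (5 ^ Module.finrank ℝ E) := by
    rintro n ⟨s, hs, h1, h2⟩
    refine Nat.le_findGreatest ?_ ⟨s, hs, h1, h2⟩
    rw [← hs]
    exact Besicovitch.card_le_of_separated s h1 h2
  obtain ⟨s, hs, h1, h2⟩ := hspec
  refine ⟨s, hs ▸ Nat.findGreatest_le _, fun v hv => ?_⟩
  by_contra! hcon
  have hvs : v ∉ s := fun h => by have := hcon v h; simp at this; linarith
  have := hle (s.card + 1) ⟨insert v s, Finset.card_insert_of_notMem hvs, ?_, ?_⟩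
  · omega
  · intro c hc
    rcases Finset.mem_insert.1 hc with rfl | hc
    exacts [hv, h1 c hc]
  · intro c hc d hd hcd
    rcases Finset.mem_insert.1 hc with h3 | h3 <;> rcases Finset.mem_insert.1 hd with h4 | h4
    · exact absurd (h3.trans h4.symm) hcd
    · rw [h3]; exact (hcon d h4).le
    · rw [h4, norm_sub_rev]; exact (hcon c h3).le
    · exact h2 c h3 d h4 hcd

lemma half_cover {V : Type*} [NormedAddCommGroup V] [NormedSpace ℝ V] (W : Submodule ℝ V)
    [FiniteDimensional ℝ W] (N : ℕ) (hN : Module.finrank ℝ W ≤ N)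
    (S : Set V) (hSW : S ⊆ W) (C : Finset V) (hC : ↑C ⊆ (W : Set V)) (r : ℝ) (hr : 0 < r)
    (hcov : ∀ v ∈ S, ∃ c ∈ C, ‖v - c‖ ≤ r) :
    ∃ C' : Finset V, ↑C' ⊆ (W : Set V) ∧ C'.card ≤ 5 ^ N * C.card ∧
      ∀ v ∈ S, ∃ c ∈ C', ‖v - c‖ ≤ r / 2 := by
  classical
  obtain ⟨s, hs, hcs⟩ := half_cover_unit W
  refine ⟨(s ×ˢ C).image (fun z => z.2 + (r / 2) • (z.1 : V)), ?_, ?_, ?_⟩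
  · intro v hv
    simp only [Finset.coe_image, Set.mem_image, Finset.mem_coe, Finset.mem_product] at hv
    obtain ⟨z, ⟨_, h2⟩, rfl⟩ := hv
    exact W.add_mem (hC h2) (W.smul_mem _ z.1.2)
  · refine Finset.card_image_le.trans ?_
    rw [Finset.card_product]
    gcongr
    exact hs.trans (Nat.pow_le_pow_right (by norm_num) hN)
  · intro v hv
    obtain ⟨c, hc, hvc⟩ := hcov v hv
    set w : W := ⟨v - c, W.sub_mem (hSW hv) (hC hc)⟩ with hw
    obtain ⟨t, ht, h⟩ := hcs ((2 / r) • w) (by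
      rw [norm_smul, Real.norm_eq_abs, abs_of_pos (by positivity)]
      have : ‖w‖ ≤ r := hvc
      calc 2 / r * ‖w‖ ≤ 2 / r * r := by gcongr
        _ = 2 := by field_simp)
    refine ⟨c + (r / 2) • (t : V), Finset.mem_image.2 ⟨(t, c), by simp [ht, hc], rfl⟩, ?_⟩
    have e : v - (c + (r / 2) • (t : V)) = (r / 2) • (((2 / r) • w - t : W) : V) := by
      have : (w : V) = v - c := rfl
      push_cast
      rw [this, smul_sub, smul_smul]
      have : r / 2 * (2 / r) = 1 := by field_simp
      rw [this, one_smul]; abel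
    rw [e, norm_smul, Real.norm_eq_abs, abs_of_pos (by positivity)]
    have : ‖(((2 / r) • w - t : W) : V)‖ ≤ 1 := h
    calc r / 2 * _ ≤ r / 2 * 1 := by gcongr
      _ = r / 2 := by ring

lemma iter_cover {V : Type*} [NormedAddCommGroup V] [NormedSpace ℝ V] (W : Submodule ℝ V)
    [FiniteDimensional ℝ W] (N : ℕ) (hN : Module.finrank ℝ W ≤ N)
    (S : Set V) (hSW : S ⊆ W) (C : Finset V) (hC : ↑C ⊆ (W : Set V)) (r : ℝ) (hr : 0 < r)
    (hcov : ∀ v ∈ S, ∃ c ∈ C, ‖v - c‖ ≤ r) (i : ℕ) :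
    ∃ C' : Finset V, ↑C' ⊆ (W : Set V) ∧ C'.card ≤ 2 ^ (3 * i * N) * C.card ∧
      ∀ v ∈ S, ∃ c ∈ C', ‖v - c‖ ≤ r * (1 / 2) ^ i := by
  induction i with
  | zero => exact ⟨C, hC, by simp, by simpa using hcov⟩
  | succ i ih =>
    obtain ⟨C1, h1, h2, h3⟩ := ih
    obtain ⟨C2, g1, g2, g3⟩ := half_cover W N hN S hSW C1 h1 (r * (1 / 2) ^ i) (by positivity) h3
    refine ⟨C2, g1, g2.trans ?_, ?_⟩
    · calc 5 ^ N * C1.card ≤ (2 ^ 3) ^ N * (2 ^ (3 * i * N) * C.card) :=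
          Nat.mul_le_mul (Nat.pow_le_pow_left (by norm_num) N) h2
        _ = _ := by rw [← pow_mul, ← mul_assoc, ← pow_add]; congr 2; ring
    · intro v hv
      obtain ⟨c, hc, h⟩ := g3 v hv
      exact ⟨c, hc, h.trans (by rw [pow_succ]; linarith)⟩

lemma inner_net {V : Type*} [NormedAddCommGroup V] (S : Set V) (C : Finset V) (r : ℝ)
    (hcov : ∀ v ∈ S, ∃ c ∈ C, ‖v - c‖ ≤ r) :
    ∃ T : Finset V, ↑T ⊆ S ∧ T.card ≤ C.card ∧ ∀ v ∈ S, ∃ t ∈ T, ‖v - t‖ ≤ 2 * r := by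
  classical
  have : ∀ c ∈ C.filter (fun c => ∃ v ∈ S, ‖v - c‖ ≤ r), ∃ v ∈ S, ‖v - c‖ ≤ r := by
    intro c hc; exact (Finset.mem_filter.1 hc).2
  choose! g hg hgr using this
  refine ⟨(C.filter (fun c => ∃ v ∈ S, ‖v - c‖ ≤ r)).image g, ?_, ?_, ?_⟩
  · intro v hv
    obtain ⟨c, hc, rfl⟩ := Finset.mem_image.1 (Finset.mem_coe.1 hv)
    exact hg c hc
  · exact Finset.card_image_le.trans (Finset.card_filter_le _ _)
  · intro v hv
    obtain ⟨c, hc, h⟩ := hcov v hv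
    have hm : c ∈ C.filter (fun c => ∃ v ∈ S, ‖v - c‖ ≤ r) :=
      Finset.mem_filter.2 ⟨hc, v, hv, h⟩
    refine ⟨g c, Finset.mem_image_of_mem _ hm, ?_⟩
    calc ‖v - g c‖ = ‖(v - c) - (g c - c)‖ := by congr 1; abel
      _ ≤ _ := (norm_sub_le _ _).trans (by linarith [hgr c hm])

end
open MeasureTheory

noncomputable section

lemma sum_geo (L : ℕ) : ∑ j ∈ Finset.range L, ((j : ℝ) + 1) * (3 / 4) ^ j ≤ 16 := by
  have : ∑ j ∈ Finset.range L, ((j : ℝ) + 1) * (3 / 4) ^ j = 16 - (4 * L + 16) * (3 / 4) ^ L := by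
    induction L with
    | zero => simp
    | succ n ih => rw [Finset.sum_range_succ, ih]; push_cast; ring
  rw [this]
  have : (0:ℝ) ≤ (4 * L + 16) * (3 / 4) ^ L := by positivity
  linarith

lemma sample_bound {m : ℕ} (N : ℕ) (hN1 : 1 ≤ N) (W : Submodule ℝ (Fin m → ℝ))
    (hN : Module.finrank ℝ W ≤ N) (K S : Set (Fin m → ℝ)) (hKW : K ⊆ W) (h0K : 0 ∈ K) (R : ℝ)
    (hR : 0 < R) (hSK : ∀ v ∈ S, ∃ w ∈ K, v = R • w)
    (φ : (Fin m → ℝ) → (Fin m → ℝ))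
    (h0S : 0 ∈ S) (hφ0 : φ 0 = 0) (D α : ℝ) (hD : 0 ≤ D) (hα : 1 / 2 ≤ α) (hα1 : α ≤ 1)
    (hinc : ∀ u ∈ S, ∀ v ∈ S, ∑ j, (φ u j - φ v j) ^ 2 ≤ (D * ‖u - v‖ ^ α) ^ 2)
    (ε : ℕ → ℝ) (hε : ∀ n, 0 < ε n)
    (hnet : ∀ n, ∃ T : Finset (Fin m → ℝ), ↑T ⊆ K ∧
      T.card ≤ (if n = 0 then 1 else 2 ^ 2 ^ n) ∧ ∀ w ∈ K, ∃ g ∈ T, ‖w - g‖ ≤ ε n) :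
    rav (fun s => ⨆ v : S, |∑ j, sgnB (s j) * φ v j|) ≤
      400 * D * R ^ α * ∑ n ∈ Finset.range (Nat.log 2 N + 1), (2 : ℝ) ^ ((n : ℝ) / 2) * ε n ^ α := by
  classical
  set n0 := Nat.log 2 N with hn0
  have hα0 : 0 ≤ α := by linarith
  have hNn0 : N ≤ 2 * 2 ^ n0 := by
    have := Nat.lt_pow_succ_log_self (b := 2) (by norm_num) N
    rw [← hn0, pow_succ] at this; omega
  have hSW : S ⊆ W := by
    intro v hv
    obtain ⟨w, hw, rfl⟩ := hSK v hv
    exact W.smul_mem _ (hKW hw)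
  set b : ℕ → ℕ := fun k => 2 ^ (min k n0) * (1 + 6 * (k - n0)) with hb
  set r : ℕ → ℝ := fun k => 2 * R * ε (min k n0) * (1 / 2) ^ (k - n0) with hr
  have hrpos : ∀ k, 0 < r k := by
    intro k; have := hε (min k n0); simp only [hr]; positivity
  have hrC : ∀ n, ∃ C : Finset (Fin m → ℝ), ↑C ⊆ (W : Set (Fin m → ℝ)) ∧
      C.card ≤ (if n = 0 then 1 else 2 ^ 2 ^ n) ∧ ∀ v ∈ S, ∃ c ∈ C, ‖v - c‖ ≤ R * ε n := by
    intro n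
    obtain ⟨T, h1, h2, h3⟩ := hnet n
    refine ⟨T.image (fun w => R • w), ?_, Finset.card_image_le.trans h2, ?_⟩
    · intro v hv
      obtain ⟨c, hc, rfl⟩ := Finset.mem_image.1 (Finset.mem_coe.1 hv)
      exact W.smul_mem _ (hKW (h1 hc))
    · intro v hv
      obtain ⟨w, hw, rfl⟩ := hSK v hv
      obtain ⟨g, hg, h⟩ := h3 w hw
      refine ⟨R • g, Finset.mem_image_of_mem _ hg, ?_⟩
      rw [← smul_sub, norm_smul, Real.norm_eq_abs, abs_of_pos hR]
      gcongr
  have hTex : ∀ k, ∃ T : Finset (Fin m → ℝ), (k = 0 → T = {0}) ∧ ↑T ⊆ S ∧ T.card ≤ 2 ^ b k ∧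
      ∀ v ∈ S, ∃ t ∈ T, ‖v - t‖ ≤ r k := by
    intro k
    rcases Nat.eq_zero_or_pos k with rfl | hk
    · refine ⟨{0}, fun _ => rfl, by simpa using h0S, by simpa using Nat.one_le_two_pow, ?_⟩
      intro v hv
      refine ⟨0, by simp, ?_⟩
      obtain ⟨T, h1, h2, h3⟩ := hnet 0
      obtain ⟨w, hw, rfl⟩ := hSK v hv
      obtain ⟨g, hg, h⟩ := h3 w hw
      obtain ⟨g', hg', h'⟩ := h3 0 h0K
      have : g = g' := Finset.card_le_one.1 (by simpa using h2) g hg g' hg'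
      subst this
      simp only [hr, Nat.zero_min, Nat.zero_sub, pow_zero, mul_one, sub_zero]
      rw [norm_smul, Real.norm_eq_abs, abs_of_pos hR]
      have h4 : ‖w‖ ≤ 2 * ε 0 := by
        have := norm_sub_le (w - g) (0 - g)
        rw [sub_sub_sub_cancel_right, sub_zero] at this
        linarith
      nlinarith
    · suffices ∃ C : Finset (Fin m → ℝ), C.card ≤ 2 ^ b k ∧
          ∀ v ∈ S, ∃ c ∈ C, ‖v - c‖ ≤ R * ε (min k n0) * (1 / 2) ^ (k - n0) by
        obtain ⟨C, h1, h2⟩ := this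
        obtain ⟨T, g1, g2, g3⟩ := inner_net S C _ h2
        refine ⟨T, fun h => by omega, g1, g2.trans h1, fun v hv => ?_⟩
        obtain ⟨t, ht, h⟩ := g3 v hv
        exact ⟨t, ht, h.trans (le_of_eq (by simp only [hr]; ring))⟩
      obtain ⟨C, h1, h2, h3⟩ := hrC (min k n0)
      obtain ⟨C', g1, g2, g3⟩ := iter_cover W N hN S hSW C h1 (R * ε (min k n0))
        (mul_pos hR (hε _)) h3 (k - n0)
      refine ⟨C', g2.trans ?_, g3⟩
      have h4 : C.card ≤ 2 ^ 2 ^ (min k n0) := by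
        refine h2.trans ?_
        split_ifs
        · exact Nat.one_le_two_pow
        · exact le_rfl
      calc 2 ^ (3 * (k - n0) * N) * C.card ≤ 2 ^ (3 * (k - n0) * N) * 2 ^ 2 ^ (min k n0) :=
            Nat.mul_le_mul_left _ h4
        _ = 2 ^ (3 * (k - n0) * N + 2 ^ (min k n0)) := by rw [pow_add]
        _ ≤ 2 ^ b k := by
            apply Nat.pow_le_pow_right (by norm_num)
            simp only [hb]
            rcases le_total k n0 with h | h
            · simp [Nat.sub_eq_zero_of_le h]
            · rw [min_eq_right h]
              have := Nat.mul_le_mul_left (3 * (k - n0)) hNn0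
              nlinarith
  choose T hT0 hTS hTc hTn using hTex
  set w : ℕ → ℝ := fun n => (2:ℝ) ^ ((n : ℝ) / 2) with hw
  have hwpos : ∀ n, 0 < w n := fun n => by simp only [hw]; positivity
  have hw2 : ∀ n, w n ^ 2 = 2 ^ n := by
    intro n
    simp only [hw]
    rw [← Real.rpow_natCast, ← Real.rpow_mul (by norm_num), ← Real.rpow_natCast]
    congr 1; push_cast; ring
  have hwm : ∀ n, w n ≤ w (n+1) := by
    intro n; simp only [hw]
    apply Real.rpow_le_rpow_of_exponent_le (by norm_num); push_cast; linarith
  set ρ : ℕ → ℝ := fun k => r k ^ α with hρ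
  have hρpos : ∀ k, 0 ≤ ρ k := fun k => Real.rpow_nonneg (hrpos k).le _
  set G := ∑ n ∈ Finset.range (n0 + 1), w n * ρ n with hG
  have hGn0 : w n0 * ρ n0 ≤ G :=
    Finset.single_le_sum (f := fun n => w n * ρ n)
      (fun n _ => mul_nonneg (hwpos n).le (hρpos n)) (Finset.self_mem_range_succ n0)
  have hs1 : ∑ k ∈ Finset.range n0, (ρ k + ρ (k + 1)) * Real.sqrt (2 * (b k + b (k + 1) + 1))
      ≤ 6 * G := by
    have hterm : ∀ k ∈ Finset.range n0,
        (ρ k + ρ (k + 1)) * Real.sqrt (2 * (b k + b (k + 1) + 1)) ≤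
          3 * (w k * ρ k) + 3 * (w (k+1) * ρ (k+1)) := by
      intro k hk
      have hk := Finset.mem_range.1 hk
      have hb1 : b k = 2 ^ k := by
        simp only [hb]; rw [min_eq_left hk.le, Nat.sub_eq_zero_of_le hk.le]; simp
      have hb2 : b (k+1) = 2 ^ (k+1) := by
        simp only [hb]; rw [min_eq_left hk, Nat.sub_eq_zero_of_le hk]; simp
      have h1 : Real.sqrt (2 * (b k + b (k + 1) + 1)) ≤ 3 * w k := by
        rw [Real.sqrt_le_left (by have := hwpos k; positivity), mul_pow, hw2, hb1, hb2]
        push_cast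
        have : (1:ℝ) ≤ 2 ^ k := one_le_pow₀ (by norm_num)
        rw [pow_succ]; linarith
      have h2 := hwm k
      calc _ ≤ (ρ k + ρ (k + 1)) * (3 * w k) :=
            mul_le_mul_of_nonneg_left h1 (add_nonneg (hρpos _) (hρpos _))
        _ ≤ _ := by nlinarith [hρpos (k+1)]
    refine (Finset.sum_le_sum hterm).trans ?_
    rw [Finset.sum_add_distrib, ← Finset.mul_sum, ← Finset.mul_sum]
    have e1 : ∑ k ∈ Finset.range n0, w k * ρ k ≤ G := by
      rw [hG, Finset.sum_range_succ]
      have := mul_nonneg (hwpos n0).le (hρpos n0); linarith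
    have e2 : ∑ k ∈ Finset.range n0, w (k+1) * ρ (k+1) ≤ G := by
      rw [hG, Finset.sum_range_succ']
      have := mul_nonneg (hwpos 0).le (hρpos 0); linarith
    linarith
  have hhalf : ((1:ℝ) / 2) ^ α ≤ 3 / 4 := by
    calc ((1:ℝ) / 2) ^ α ≤ ((1:ℝ) / 2) ^ ((1:ℝ)/2) :=
          Real.rpow_le_rpow_of_exponent_ge (by norm_num) (by norm_num) hα
      _ = Real.sqrt (1/2) := (Real.sqrt_eq_rpow _).symm
      _ ≤ 3/4 := by rw [Real.sqrt_le_left (by norm_num)]; norm_num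
  have hρj : ∀ j, ρ (n0 + j) ≤ ρ n0 * (3/4) ^ j := by
    intro j
    have e : r (n0 + j) = r n0 * (1/2) ^ j := by
      simp [hr]
    simp only [hρ]
    rw [e, Real.mul_rpow (hrpos _).le (by positivity), ← Real.rpow_natCast, ← Real.rpow_mul (by norm_num),
      mul_comm (j:ℝ) α, Real.rpow_mul (by norm_num), Real.rpow_natCast]
    gcongr
    exact Real.rpow_nonneg (hrpos _).le _
  have hs2 : ∀ L, ∑ j ∈ Finset.range L, (ρ (n0 + j) + ρ (n0 + j + 1)) *
      Real.sqrt (2 * (b (n0 + j) + b (n0 + j + 1) + 1)) ≤ 160 * G := by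
    intro L
    have hterm : ∀ j ∈ Finset.range L, (ρ (n0 + j) + ρ (n0 + j + 1)) *
      Real.sqrt (2 * (b (n0 + j) + b (n0 + j + 1) + 1)) ≤
        10 * (w n0 * ρ n0) * ((j + 1) * (3/4) ^ j) := by
      intro j _
      have h1 : ρ (n0 + j) + ρ (n0 + j + 1) ≤ 2 * (ρ n0 * (3/4) ^ j) := by
        have a1 := hρj j
        have a2 := hρj (j+1)
        rw [← add_assoc] at a2
        have : ρ n0 * (3/4) ^ (j+1) ≤ ρ n0 * (3/4)^j := by
          apply mul_le_mul_of_nonneg_left _ (hρpos _)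
          exact pow_le_pow_of_le_one (by norm_num) (by norm_num) (Nat.le_succ j)
        linarith
      have hb1 : b (n0 + j) = 2 ^ n0 * (1 + 6 * j) := by simp [hb]
      have hb2 : b (n0 + j + 1) = 2 ^ n0 * (1 + 6 * (j + 1)) := by
        simp only [hb]
        rw [min_eq_right (by omega), show n0 + j + 1 - n0 = j + 1 by omega]
      have h2 : Real.sqrt (2 * (b (n0 + j) + b (n0 + j + 1) + 1)) ≤ 5 * (j + 1) * w n0 := by
        rw [Real.sqrt_le_left (by have := hwpos n0; positivity), mul_pow, hw2, hb1, hb2]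
        push_cast
        have : (1:ℝ) ≤ 2 ^ n0 := one_le_pow₀ (by norm_num)
        have hj : (0:ℝ) ≤ j := Nat.cast_nonneg j
        have h3 : 2 * ((2:ℝ) ^ n0 * (1 + 6 * j) + 2 ^ n0 * (1 + 6 * (j + 1)) + 1) ≤
          2 ^ n0 * (24 * j + 18) := by nlinarith
        refine h3.trans ?_
        rw [mul_comm]
        gcongr
        nlinarith
      calc _ ≤ (2 * (ρ n0 * (3/4) ^ j)) * (5 * (j + 1) * w n0) := by
            apply mul_le_mul h1 h2 (Real.sqrt_nonneg _)
            have := hρpos n0; positivity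
        _ = _ := by ring
    refine (Finset.sum_le_sum hterm).trans ?_
    rw [← Finset.mul_sum]
    have := sum_geo L
    have h0 : 0 ≤ w n0 * ρ n0 := mul_nonneg (hwpos n0).le (hρpos n0)
    calc _ ≤ 10 * (w n0 * ρ n0) * 16 := by gcongr
      _ ≤ _ := by linarith
  have hmain : ∀ L, rav (fun s => ⨆ v : S, |∑ j, sgnB (s j) * φ v j|) ≤
      D * (166 * G) + Real.sqrt m * D * (ρ n0 * (3/4) ^ L) := by
    intro L
    refine (chaining S φ h0S hφ0 D α hD hα0 hα1 hinc T r b (hT0 0 rfl) hTS hTc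
      (fun k => (hrpos k).le) hTn (n0 + L)).trans ?_
    rw [Finset.sum_range_add]
    have := hs2 L
    apply add_le_add
    · apply mul_le_mul_of_nonneg_left _ hD
      linarith
    · exact mul_le_mul_of_nonneg_left (hρj L) (by positivity)
  have hlim : Filter.Tendsto (fun L : ℕ => D * (166 * G) + Real.sqrt m * D * (ρ n0 * (3/4) ^ L))
      Filter.atTop (nhds (D * (166 * G) + Real.sqrt m * D * (ρ n0 * 0))) := by
    have := tendsto_pow_atTop_nhds_zero_of_lt_one (r := (3:ℝ)/4) (by norm_num) (by norm_num)
    exact ((this.const_mul _).const_mul _).const_add _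
  have hfin := ge_of_tendsto' hlim hmain
  rw [mul_zero, mul_zero, add_zero] at hfin
  have hGle : G ≤ 2 * R ^ α * ∑ n ∈ Finset.range (n0 + 1), w n * ε n ^ α := by
    rw [hG, Finset.mul_sum]
    apply Finset.sum_le_sum
    intro n hn
    have hn : n ≤ n0 := Nat.lt_succ_iff.1 (Finset.mem_range.1 hn)
    have : r n = 2 * R * ε n := by simp [hr, hn]
    simp only [hρ]
    rw [this, Real.mul_rpow (by positivity) (hε n).le, Real.mul_rpow (by norm_num) hR.le]
    have h2 : (2:ℝ) ^ α ≤ 2 := by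
      calc (2:ℝ) ^ α ≤ 2 ^ (1:ℝ) := Real.rpow_le_rpow_of_exponent_le (by norm_num) hα1
        _ = 2 := Real.rpow_one 2
    have h3 : 0 ≤ w n * (R ^ α * ε n ^ α) := by
      have := hwpos n; have := hε n; positivity
    nlinarith
  refine hfin.trans ?_
  have hsum0 : 0 ≤ R ^ α * ∑ n ∈ Finset.range (n0 + 1), w n * ε n ^ α := by
    apply mul_nonneg (by positivity)
    apply Finset.sum_nonneg
    intro n _; have := hwpos n; have := hε n; positivity
  calc D * (166 * G) ≤ D * (166 * (2 * R ^ α * ∑ n ∈ Finset.range (n0 + 1), w n * ε n ^ α)) := by gcongr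
    _ ≤ _ := by nlinarith

end
open MeasureTheory

noncomputable section

lemma phi_pos {Φ : ℝ → ℝ} (hΦ : IsPhiPrefun Φ) {q : ℝ} (hd : DecQ Φ q) {t : ℝ} (ht : 0 < t) :
    0 < Φ t := by
  by_contra hcon
  have h0 : Φ t = 0 := le_antisymm (not_lt.1 hcon) (hΦ.nonneg t ht.le)
  have h1 : ∀ u, t < u → Φ u ≤ 0 := by
    intro u hu
    have := hd t u ht hu
    rw [h0, zero_div] at this
    have hp : 0 < u ^ q := Real.rpow_pos_of_pos (ht.trans hu) _
    rwa [div_le_iff₀ hp, zero_mul] at this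
  obtain ⟨u, hu1, hu2⟩ := ((hΦ.tendsto_atTop.eventually_gt_atTop 0).and
    (Filter.eventually_gt_atTop t)).exists
  linarith [h1 u hu2]

lemma phi_lip {Φ : ℝ → ℝ} (hΦ : IsPhiPrefun Φ) {q : ℝ} (hq : 1 ≤ q) (hd : DecQ Φ q) {s t : ℝ}
    (hs : 0 ≤ s) (hst : s ≤ t) (ht : 0 < t) : Φ t - Φ s ≤ q * Φ t * ((t - s) / t) := by
  rcases hst.eq_or_lt with rfl | hlt
  · simp
  rcases hs.eq_or_lt with rfl | hs
  · rw [hΦ.map_zero, sub_zero, sub_zero, div_self ht.ne']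
    nlinarith [hΦ.nonneg t ht.le]
  have h1 := hd s t hs hlt
  have hp : 0 < t ^ q := Real.rpow_pos_of_pos ht _
  have hp' : 0 < s ^ q := Real.rpow_pos_of_pos hs _
  rw [div_le_div_iff₀ hp hp'] at h1
  have h2 : Φ t * (s / t) ^ q ≤ Φ s := by
    rw [Real.div_rpow hs.le ht.le, ← mul_div_assoc, div_le_iff₀ hp]; exact h1
  have h3 := one_add_mul_self_le_rpow_one_add (s := s / t - 1)
    (by have : 0 ≤ s / t := by positivity
        linarith) hq
  rw [add_sub_cancel] at h3
  have h4 : (t - s) / t = 1 - s / t := by rw [sub_div, div_self ht.ne']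
  rw [h4]
  have := mul_le_mul_of_nonneg_left h3 (hΦ.nonneg t ht.le)
  nlinarith

lemma phi_contOn {Φ : ℝ → ℝ} (hΦ : IsPhiPrefun Φ) {q : ℝ} (hq : 1 ≤ q) (hd : DecQ Φ q) :
    ContinuousOn Φ (Set.Ici 0) := by
  intro t0 ht0
  rcases (Set.mem_Ici.1 ht0).eq_or_lt with rfl | hpos
  · rw [← continuousWithinAt_Ioi_iff_Ici]
    unfold ContinuousWithinAt
    rw [hΦ.map_zero]; exact hΦ.tendsto_zero
  apply ContinuousAt.continuousWithinAt
  unfold ContinuousAt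
  rw [tendsto_iff_norm_sub_tendsto_zero]
  have hb : Filter.Tendsto (fun t => q * Φ (2 * t0) * (|t - t0| / t0)) (nhds t0)
      (nhds (q * Φ (2 * t0) * (|t0 - t0| / t0))) := by
    apply Continuous.tendsto; fun_prop
  rw [sub_self, abs_zero, zero_div, mul_zero] at hb
  refine squeeze_zero' (Filter.Eventually.of_forall fun _ => norm_nonneg _) ?_ hb
  filter_upwards [Ioo_mem_nhds (show (0:ℝ) < t0 by exact hpos) (show t0 < 2 * t0 by linarith)]
    with t ⟨ht1, ht2⟩
  rw [Real.norm_eq_abs]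
  rcases le_total t t0 with h | h
  · have := phi_lip hΦ hq hd ht1.le h hpos
    have hm := hΦ.mono ht1.le hpos.le h
    have hm2 := hΦ.mono hpos.le (show (0:ℝ) ≤ 2 * t0 by linarith) (show t0 ≤ 2 * t0 by linarith)
    rw [abs_of_nonpos (by linarith), abs_of_nonpos (by linarith)]
    have e : 0 ≤ (t0 - t) / t0 := div_nonneg (by linarith) hpos.le
    rw [neg_sub, neg_sub]
    refine this.trans ?_
    gcongr
  · have := phi_lip hΦ hq hd hpos.le h ht1
    have hm := hΦ.mono hpos.le ht1.le h
    have hm2 := hΦ.mono ht1.le (show (0:ℝ) ≤ 2 * t0 by linarith) ht2.le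
    rw [abs_of_nonneg (by linarith), abs_of_nonneg (by linarith)]
    have e : 0 ≤ t - t0 := by linarith
    have e2 := hΦ.nonneg t ht1.le
    have e3 := e2.trans hm2
    refine this.trans ?_
    gcongr

lemma phi_sq_aux {Φ : ℝ → ℝ} (hΦ : IsPhiPrefun Φ) {q ps a M : ℝ} (hq : 1 ≤ q) (hd : DecQ Φ q)
    (ha : 1 ≤ a) (hps1 : 0 < ps) (hps2 : ps ≤ 2) (hi : AIncP Φ ps a) {s t : ℝ}
    (hs : 0 ≤ s) (hst : s ≤ t) (htM : t ≤ M) :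
    (Φ t - Φ s) ^ 2 ≤ q ^ 2 * (a * (Φ M / M ^ ps)) * Φ t * |t - s| ^ ps := by
  rcases (hs.trans hst).eq_or_lt with h0 | ht
  · have : s = t := by linarith
    subst this
    rw [← h0, hΦ.map_zero]; simp
  have hM : 0 < M := ht.trans_le htM
  have hΦt := hΦ.nonneg t ht.le
  have h1 := phi_lip hΦ hq hd hs hst ht
  have h2 : 0 ≤ Φ t - Φ s := by linarith [hΦ.mono hs ht.le hst]
  set u := (t - s) / t with hu
  have hu0 : 0 ≤ u := div_nonneg (by linarith) ht.le
  have hu1 : u ≤ 1 := by rw [hu, div_le_one ht]; linarith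
  have h3 : u ^ 2 ≤ u ^ ps := by
    rw [← Real.rpow_natCast]
    rcases hu0.eq_or_lt with h | h
    · rw [← h]; simp [Real.zero_rpow hps1.ne']
    · exact Real.rpow_le_rpow_of_exponent_ge h hu1 (by exact_mod_cast hps2)
  have h4 : Φ t / t ^ ps ≤ a * (Φ M / M ^ ps) := by
    rcases htM.eq_or_lt with rfl | hlt
    · have : 0 ≤ Φ t / t ^ ps := by positivity
      nlinarith
    · exact hi t M ht hlt
  have htp : 0 < t ^ ps := by positivity
  have hrp : 0 ≤ |t - s| ^ ps := by positivity
  calc (Φ t - Φ s) ^ 2 ≤ (q * Φ t * u) ^ 2 := by gcongr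
    _ = q ^ 2 * Φ t ^ 2 * u ^ 2 := by ring
    _ ≤ q ^ 2 * Φ t ^ 2 * u ^ ps := by gcongr
    _ = q ^ 2 * (Φ t / t ^ ps) * Φ t * |t - s| ^ ps := by
        rw [abs_of_nonneg (by linarith), hu, Real.div_rpow (by linarith) ht.le]; ring
    _ ≤ _ := by gcongr

lemma phi_sq {Φ : ℝ → ℝ} (hΦ : IsPhiPrefun Φ) {q ps a M : ℝ} (hq : 1 ≤ q) (hd : DecQ Φ q)
    (ha : 1 ≤ a) (hps1 : 0 < ps) (hps2 : ps ≤ 2) (hi : AIncP Φ ps a) {s t : ℝ}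
    (hs : 0 ≤ s) (hsM : s ≤ M) (ht : 0 ≤ t) (htM : t ≤ M) :
    (Φ t - Φ s) ^ 2 ≤ q ^ 2 * (a * (Φ M / M ^ ps)) * (Φ t + Φ s) * |t - s| ^ ps := by
  have hM : 0 ≤ M := hs.trans hsM
  have h1 := hΦ.nonneg t ht
  have h2 := hΦ.nonneg s hs
  have h3 := hΦ.nonneg M hM
  rcases le_total s t with h | h
  · refine (phi_sq_aux hΦ hq hd ha hps1 hps2 hi hs h htM).trans ?_
    gcongr; linarith
  · have := (phi_sq_aux hΦ hq hd ha hps1 hps2 hi ht h hsM)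
    rw [abs_sub_comm] at this
    rw [← neg_sq, neg_sub]
    refine this.trans ?_
    gcongr; linarith

end
open MeasureTheory

noncomputable section

lemma sup_bdd {ι Z : Type*} (F : ι → Z → ℝ) (B : ℝ) (hB : ∀ i z, |F i z| ≤ B) (z : Z) :
    BddAbove (Set.range fun i => |F i z|) := ⟨B, by rintro _ ⟨i, rfl⟩; exact hB i z⟩

lemma sup_meas {ι Z : Type*} [TopologicalSpace Z] [MeasurableSpace Z] [BorelSpace Z]
    (F : ι → Z → ℝ) (hF : ∀ i, Continuous (F i)) (B : ℝ) (hB : ∀ i z, |F i z| ≤ B) :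
    Measurable (fun z => ⨆ i, |F i z|) :=
  (lowerSemicontinuous_ciSup (sup_bdd F B hB)
    (fun i => (hF i).abs.lowerSemicontinuous)).measurable

lemma sup_int {ι Z : Type*} [Nonempty ι] [TopologicalSpace Z] [MeasurableSpace Z] [BorelSpace Z]
    (F : ι → Z → ℝ) (hF : ∀ i, Continuous (F i)) (B : ℝ) (hB : ∀ i z, |F i z| ≤ B)
    (ν : Measure Z) [IsFiniteMeasure ν] :
    Integrable (fun z => ⨆ i, |F i z|) ν := by
  refine Integrable.of_bound (sup_meas F hF B hB).aestronglyMeasurable B (.of_forall fun z => ?_)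
  rw [Real.norm_eq_abs, abs_of_nonneg (Real.iSup_nonneg fun i => abs_nonneg _)]
  exact ciSup_le fun i => hB i z

lemma sgnB_abs (b : Bool) : |sgnB b| = 1 := by cases b <;> simp [sgnB]

lemma avg_bd {m : ℕ} (hm : 1 ≤ m) (f : Fin m → ℝ) (B : ℝ) (hf : ∀ j, |f j| ≤ B) :
    |(∑ j, f j) / (m : ℝ)| ≤ B := by
  have hm' : (0:ℝ) < m := by exact_mod_cast hm
  rw [abs_div, abs_of_pos hm', div_le_iff₀ hm']
  calc |∑ j, f j| ≤ ∑ j, |f j| := Finset.abs_sum_le_sum_abs _ _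
    _ ≤ ∑ _j : Fin m, B := Finset.sum_le_sum fun j _ => hf j
    _ = B * m := by simp [mul_comm]

lemma symmetrization {Ω ι : Type*} [Nonempty ι] [TopologicalSpace Ω] [SecondCountableTopology Ω]
    [MeasurableSpace Ω] [BorelSpace Ω] (μ : Measure Ω) [IsProbabilityMeasure μ]
    (g : ι → Ω → ℝ) (hg : ∀ i, Continuous (g i)) (B : ℝ) (hB : ∀ i y, |g i y| ≤ B)
    (m : ℕ) (hm : 1 ≤ m) :
    ∫ x : Fin m → Ω, (⨆ i, |(∑ j, g i (x j)) / (m : ℝ) - ∫ y, g i y ∂μ|)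
        ∂(Measure.pi fun _ : Fin m => μ) ≤
      2 * ∫ x : Fin m → Ω, rav (fun s => ⨆ i, |(∑ j, sgnB (s j) * g i (x j)) / (m : ℝ)|)
        ∂(Measure.pi fun _ : Fin m => μ) := by
  set ν := Measure.pi fun _ : Fin m => μ with hν
  set ν2 := Measure.pi fun _ : Fin m => μ.prod μ with hν2
  have hm' : (m : ℝ) ≠ 0 := by have : (0:ℝ) < m := by exact_mod_cast hm
                               exact this.ne'
  have gint : ∀ i, Integrable (g i) μ := fun i =>
    Integrable.of_bound (hg i).aestronglyMeasurable B (.of_forall fun y => hB i y)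
  have hev : ∀ j, MeasurePreserving (fun x : Fin m → Ω => x j) ν μ := fun j =>
    measurePreserving_eval (fun _ : Fin m => μ) j
  have gint' : ∀ i j, Integrable (fun x : Fin m → Ω => g i (x j)) ν := fun i j =>
    (hev j).integrable_comp_of_integrable (gint i)
  have gval : ∀ i j, ∫ x : Fin m → Ω, g i (x j) ∂ν = ∫ y, g i y ∂μ := by
    intro i j
    rw [← (hev j).map_eq, integral_map (hev j).measurable.aemeasurable
      (hg i).aestronglyMeasurable]
  have hdb : ∀ i (y z : Ω), |g i y - g i z| ≤ 2 * B := fun i y z => by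
    have := abs_sub (g i y) (g i z); linarith [hB i y, hB i z]
  -- Step A
  set P : (Fin m → Ω) → (Fin m → Ω) → ℝ := fun x x' =>
    ⨆ i, |(∑ j, (g i (x j) - g i (x' j))) / (m : ℝ)| with hP
  have hPint : Integrable (fun z : (Fin m → Ω) × (Fin m → Ω) => P z.1 z.2) (ν.prod ν) := by
    refine sup_int (fun i (z : (Fin m → Ω) × (Fin m → Ω)) =>
      (∑ j, (g i (z.1 j) - g i (z.2 j))) / (m : ℝ)) (fun i => ?_) (2 * B) (fun i z => ?_) _
    · have := hg i; fun_prop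
    · exact avg_bd hm _ _ fun j => hdb _ _ _
  have hPint1 : ∀ x, Integrable (fun x' => P x x') ν := by
    intro x
    refine sup_int (fun i (x' : Fin m → Ω) =>
      (∑ j, (g i (x j) - g i (x' j))) / (m : ℝ)) (fun i => ?_) (2 * B) (fun i z => ?_) _
    · have := hg i; fun_prop
    · exact avg_bd hm _ _ fun j => hdb _ _ _
  have hA1 : ∀ x : Fin m → Ω, (⨆ i, |(∑ j, g i (x j)) / (m : ℝ) - ∫ y, g i y ∂μ|) ≤
      ∫ x', P x x' ∂ν := by
    intro x
    refine ciSup_le fun i => ?_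
    have e : (∑ j, g i (x j)) / (m : ℝ) - ∫ y, g i y ∂μ =
        ∫ x' : Fin m → Ω, (∑ j, (g i (x j) - g i (x' j))) / (m : ℝ) ∂ν := by
      have hI : ∀ j ∈ Finset.univ, Integrable (fun x' : Fin m → Ω => g i (x j) - g i (x' j)) ν :=
        fun j _ => (integrable_const _).sub (gint' i j)
      rw [integral_div, integral_finsetSum _ hI]
      have : ∀ j, ∫ x' : Fin m → Ω, (g i (x j) - g i (x' j)) ∂ν = g i (x j) - ∫ y, g i y ∂μ := by
        intro j
        rw [integral_sub (integrable_const _) (gint' i j), gval]; simp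
      simp_rw [this]
      rw [Finset.sum_sub_distrib]
      simp; field_simp
    rw [e]
    refine abs_integral_le_integral_abs.trans ?_
    refine integral_mono ?_ (hPint1 x) ?_
    · apply Integrable.abs
      apply Integrable.div_const
      exact integrable_finsetSum _ (fun j _ => (integrable_const _).sub (gint' i j))
    · intro x'
      exact le_ciSup (sup_bdd (fun i (x' : Fin m → Ω) =>
        (∑ j, (g i (x j) - g i (x' j))) / (m : ℝ)) (2 * B)
        (fun i z => avg_bd hm _ _ fun j => hdb _ _ _) x') i
  have hSint : Integrable (fun x : Fin m → Ω =>
      ⨆ i, |(∑ j, g i (x j)) / (m : ℝ) - ∫ y, g i y ∂μ|) ν := by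
    refine sup_int (fun i (x : Fin m → Ω) => (∑ j, g i (x j)) / (m : ℝ) - ∫ y, g i y ∂μ)
      (fun i => ?_) (2 * B) (fun i x => ?_) _
    · have := hg i; fun_prop
    · have h1 := avg_bd hm (fun j => g i (x j)) B (fun j => hB i _)
      have h2 : |∫ y, g i y ∂μ| ≤ B := by
        have := norm_integral_le_of_norm_le_const (μ := μ) (f := g i) (C := B)
          (.of_forall fun y => hB i y)
        simpa using this
      have := abs_sub ((∑ j, g i (x j)) / (m : ℝ)) (∫ y, g i y ∂μ)
      linarith
  have hA : ∫ x : Fin m → Ω, (⨆ i, |(∑ j, g i (x j)) / (m : ℝ) - ∫ y, g i y ∂μ|) ∂ν ≤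
      ∫ z : Fin m → Ω × Ω, (⨆ i, |(∑ j, (g i (z j).1 - g i (z j).2)) / (m : ℝ)|) ∂ν2 := by
    refine (integral_mono hSint hPint.integral_prod_left hA1).trans ?_
    rw [← integral_prod _ hPint]
    have hmp := measurePreserving_arrowProdEquivProdArrow Ω Ω (Fin m) (fun _ => μ) (fun _ => μ)
    rw [← hmp.integral_comp']
    exact le_of_eq rfl
  -- Steps B, C
  have hσ : ∀ s : Fin m → Bool,
      ∫ x : Fin m → Ω, (⨆ i, |(∑ j, g i (x j)) / (m : ℝ) - ∫ y, g i y ∂μ|) ∂ν ≤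
      2 * ∫ x : Fin m → Ω, (⨆ i, |(∑ j, sgnB (s j) * g i (x j)) / (m : ℝ)|) ∂ν := by
    intro s
    refine hA.trans ?_
    set τ : (Fin m → Ω × Ω) → (Fin m → Ω × Ω) := fun z j => if s j then z j else (z j).swap with hτ
    have hτm : MeasurePreserving τ ν2 ν2 := by
      refine measurePreserving_pi (f := fun j (w : Ω × Ω) => if s j then w else w.swap) _ _ ?_
      intro j
      cases s j
      · simpa using Measure.measurePreserving_swap
      · simpa using! MeasurePreserving.id (μ.prod μ)
    have hc : ∀ i, Continuous (fun z : Fin m → Ω × Ω =>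
        (∑ j, (g i (z j).1 - g i (z j).2)) / (m : ℝ)) := by
      intro i; have := hg i; fun_prop
    have e1 : ∫ z : Fin m → Ω × Ω, (⨆ i, |(∑ j, (g i (z j).1 - g i (z j).2)) / (m : ℝ)|) ∂ν2 =
        ∫ z : Fin m → Ω × Ω,
          (⨆ i, |(∑ j, sgnB (s j) * (g i (z j).1 - g i (z j).2)) / (m : ℝ)|) ∂ν2 := by
      conv_lhs => rw [← hτm.map_eq]
      rw [integral_map hτm.measurable.aemeasurable (sup_meas _ hc (2 * B)
        (fun i z => avg_bd hm _ _ fun j => hdb _ _ _)).aestronglyMeasurable]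
      congr 1
      ext z
      congr 1
      ext i
      congr 2
      refine Finset.sum_congr rfl fun j _ => ?_
      simp only [hτ]
      cases s j <;> simp [sgnB]
    rw [e1]
    have qb : ∀ i (x : Fin m → Ω), |(∑ j, sgnB (s j) * g i (x j)) / (m : ℝ)| ≤ B := by
      intro i x
      refine avg_bd hm _ _ fun j => ?_
      rw [abs_mul, sgnB_abs, one_mul]; exact hB i _
    have qc : ∀ i, Continuous (fun x : Fin m → Ω => (∑ j, sgnB (s j) * g i (x j)) / (m : ℝ)) := by
      intro i; have := hg i; fun_prop
    have m1 : MeasurePreserving (fun (z : Fin m → Ω × Ω) j => (z j).1) ν2 ν :=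
      measurePreserving_pi (f := fun _ (w : Ω × Ω) => w.1) _ _ fun j => measurePreserving_fst
    have m2 : MeasurePreserving (fun (z : Fin m → Ω × Ω) j => (z j).2) ν2 ν :=
      measurePreserving_pi (f := fun _ (w : Ω × Ω) => w.2) _ _ fun j => measurePreserving_snd
    have qi := sup_int _ qc B qb ν
    have i1 : Integrable (fun z : Fin m → Ω × Ω =>
        ⨆ i, |(∑ j, sgnB (s j) * g i (z j).1) / (m : ℝ)|) ν2 := m1.integrable_comp_of_integrable qi
    have i2 : Integrable (fun z : Fin m → Ω × Ω =>
        ⨆ i, |(∑ j, sgnB (s j) * g i (z j).2) / (m : ℝ)|) ν2 := m2.integrable_comp_of_integrable qi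
    have v1 : ∫ z : Fin m → Ω × Ω, (⨆ i, |(∑ j, sgnB (s j) * g i (z j).1) / (m : ℝ)|) ∂ν2 =
        ∫ x : Fin m → Ω, (⨆ i, |(∑ j, sgnB (s j) * g i (x j)) / (m : ℝ)|) ∂ν := by
      rw [← m1.map_eq, integral_map m1.measurable.aemeasurable
        (sup_meas _ qc B qb).aestronglyMeasurable]
    have v2 : ∫ z : Fin m → Ω × Ω, (⨆ i, |(∑ j, sgnB (s j) * g i (z j).2) / (m : ℝ)|) ∂ν2 =
        ∫ x : Fin m → Ω, (⨆ i, |(∑ j, sgnB (s j) * g i (x j)) / (m : ℝ)|) ∂ν := by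
      rw [← m2.map_eq, integral_map m2.measurable.aemeasurable
        (sup_meas _ qc B qb).aestronglyMeasurable]
    rw [two_mul]
    nth_rewrite 1 [← v1]
    rw [← v2, ← integral_add i1 i2]
    refine integral_mono ?_ (i1.add i2) ?_
    · refine sup_int (fun i (z : Fin m → Ω × Ω) =>
        (∑ j, sgnB (s j) * (g i (z j).1 - g i (z j).2)) / (m : ℝ)) (fun i => ?_) (2 * B)
        (fun i z => ?_) _
      · have := hg i; fun_prop
      · refine avg_bd hm _ _ fun j => ?_
        rw [abs_mul, sgnB_abs, one_mul]; exact hdb _ _ _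
    · intro z
      refine ciSup_le fun i => ?_
      have a1 := le_ciSup (sup_bdd _ B qb (fun j => (z j).1)) i
      have a2 := le_ciSup (sup_bdd _ B qb (fun j => (z j).2)) i
      have : (∑ j, sgnB (s j) * (g i (z j).1 - g i (z j).2)) / (m : ℝ) =
        (∑ j, sgnB (s j) * g i (z j).1) / (m : ℝ) - (∑ j, sgnB (s j) * g i (z j).2) / (m : ℝ) := by
        rw [← sub_div, ← Finset.sum_sub_distrib]; simp_rw [mul_sub]
      rw [this]
      exact (abs_sub _ _).trans (add_le_add a1 a2)
  have h1 := rav_mono hσ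
  rw [rav_const, rav_mul_left] at h1
  refine h1.trans (le_of_eq ?_)
  unfold rav
  rw [integral_div, integral_finsetSum]
  intro s _
  refine sup_int (fun i (x : Fin m → Ω) => (∑ j, sgnB (s j) * g i (x j)) / (m : ℝ))
    (fun i => ?_) B (fun i x => ?_) ν
  · have := hg i; fun_prop
  · refine avg_bd hm _ _ fun j => ?_
    rw [abs_mul, sgnB_abs, one_mul]; exact hB i _

end
open MeasureTheory

noncomputable section

lemma equicont_of_finite {Ω : Type*} [TopologicalSpace Ω] [CompactSpace Ω]
    (X : Submodule ℝ (Ω → ℝ)) [FiniteDimensional ℝ X] (hX : ∀ f ∈ X, Continuous f) (B : ℝ)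
    (y0 : Ω) (δ : ℝ) (hδ : 0 < δ) :
    ∀ᶠ y in nhds y0, ∀ f ∈ X, (∀ z, |f z| ≤ B) → |f y - f y0| ≤ δ := by
  set X' : Submodule ℝ C(Ω, ℝ) := X.comap (ContinuousMap.coeFnLinearMap ℝ) with hX'
  let L : X' →ₗ[ℝ] X := (ContinuousMap.coeFnLinearMap ℝ).restrict (fun f hf => hf)
  have hL : Function.Injective L := by
    intro f g h
    have := congrArg Subtype.val h
    apply Subtype.ext
    exact DFunLike.coe_injective this
  have : FiniteDimensional ℝ X' := Module.Finite.of_injective L hL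
  have : ProperSpace X' := FiniteDimensional.proper ℝ X'
  have hK : IsCompact (Metric.closedBall (0 : X') B) := isCompact_closedBall _ _
  have hev := hK.eventually_forall_of_forall_eventually (x₀ := y0)
    (P := fun y (f : X') => |(f : C(Ω, ℝ)) y - (f : C(Ω, ℝ)) y0| ≤ δ) ?_
  · filter_upwards [hev] with y hy f hf hfB
    have hB : 0 ≤ B := (abs_nonneg _).trans (hfB y0)
    have := hy ⟨⟨f, hX f hf⟩, hf⟩ ?_
    · exact this
    · rw [mem_closedBall_zero_iff]
      change ‖(⟨f, hX f hf⟩ : C(Ω, ℝ))‖ ≤ B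
      exact (ContinuousMap.norm_le _ hB).2 hfB
  · intro f _
    have hc : Continuous (fun z : Ω × X' => |(z.2 : C(Ω, ℝ)) z.1 - (z.2 : C(Ω, ℝ)) y0|) := by
      fun_prop
    have : ∀ᶠ z in nhds ((y0, f) : Ω × X'), |(z.2 : C(Ω, ℝ)) z.1 - (z.2 : C(Ω, ℝ)) y0| < δ := by
      apply hc.continuousAt.eventually_lt continuousAt_const
      simpa using hδ
    have h2 := this.mono (fun _ h => le_of_lt h)
    exact h2

lemma ent_le {X : Type*} (dd dd' : X → X → ℝ) (F : Set X) (n : ℕ) (δ : ℝ) (hδ : 0 ≤ δ)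
    (h : ∀ f ∈ F, ∀ g ∈ F, dd' f g ≤ dd f g + δ)
    (hne : {ε : ℝ | 0 < ε ∧ ∃ T : Finset X, ↑T ⊆ F ∧
      T.card ≤ (if n = 0 then 1 else 2 ^ 2 ^ n) ∧ ∀ f ∈ F, ∃ g ∈ T, dd f g < ε}.Nonempty) :
    entropyNumD dd' F n ≤ entropyNumD dd F n + δ := by
  rw [← sub_le_iff_le_add]
  unfold entropyNumD
  refine le_csInf hne ?_
  rintro ε ⟨h0, T, h1, h2, h3⟩
  rw [sub_le_iff_le_add]
  refine csInf_le ⟨0, fun x hx => hx.1.le⟩ ⟨by linarith, T, h1, h2, fun f hf => ?_⟩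
  obtain ⟨g, hg, h4⟩ := h3 f hf
  exact ⟨g, hg, by linarith [h f hf g (h1 hg)]⟩

lemma ent_nonneg {X : Type*} (dd : X → X → ℝ) (F : Set X) (n : ℕ) : 0 ≤ entropyNumD dd F n :=
  Real.sInf_nonneg fun _ hx => hx.1.le

lemma ent_set_nonempty {X : Type*} (dd : X → X → ℝ) (F : Set X) (n : ℕ) (B : ℝ) (hB : 0 ≤ B)
    (hF : F.Nonempty) (h : ∀ f ∈ F, ∀ g ∈ F, dd f g ≤ B) :
    {ε : ℝ | 0 < ε ∧ ∃ T : Finset X, ↑T ⊆ F ∧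
      T.card ≤ (if n = 0 then 1 else 2 ^ 2 ^ n) ∧ ∀ f ∈ F, ∃ g ∈ T, dd f g < ε}.Nonempty := by
  obtain ⟨f0, hf0⟩ := hF
  refine ⟨B + 1, by linarith, {f0}, by simpa using hf0, ?_, fun f hf => ⟨f0, by simp, ?_⟩⟩
  · rw [Finset.card_singleton]
    split_ifs
    · exact le_rfl
    · exact Nat.one_le_two_pow
  · linarith [h f hf f0 hf0]

lemma iSup_eq_norm {Ω : Type*} {m : ℕ} (hm : 1 ≤ m) (x : Fin m → Ω) (f g : Ω → ℝ) :
    (⨆ j, |f (x j) - g (x j)|) = ‖(fun j => f (x j)) - (fun j => g (x j))‖ := by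
  have : Nonempty (Fin m) := ⟨⟨0, hm⟩⟩
  apply le_antisymm
  · refine ciSup_le fun j => ?_
    exact norm_le_pi_norm ((fun j => f (x j)) - (fun j => g (x j))) j
  · refine (pi_norm_le_iff_of_nonneg (Real.iSup_nonneg fun _ => abs_nonneg _)).2 fun j => ?_
    exact le_ciSup (f := fun j => |f (x j) - g (x j)|) (Set.finite_range _).bddAbove j

lemma ent_cont {Ω : Type*} [TopologicalSpace Ω] {m : ℕ} (hm : 1 ≤ m) (F : Set (Ω → ℝ))
    (hF : F.Nonempty) (B : ℝ) (hB0 : 0 ≤ B) (hB : ∀ f ∈ F, ∀ y, |f y| ≤ B)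
    (heq : ∀ y0, ∀ δ > 0, ∀ᶠ y in nhds y0, ∀ f ∈ F, |f y - f y0| ≤ δ) (n : ℕ) :
    Continuous (fun x : Fin m → Ω =>
      entropyNumD (fun f g : Ω → ℝ => ⨆ j, |f (x j) - g (x j)|) F n) := by
  have : Nonempty (Fin m) := ⟨⟨0, hm⟩⟩
  have hne : ∀ x : Fin m → Ω, _ := fun x => ent_set_nonempty
    (fun f g : Ω → ℝ => ⨆ j, |f (x j) - g (x j)|) F n (2 * B) (by linarith) hF (by
      intro f hf g hg
      refine ciSup_le fun j => ?_
      have := abs_sub (f (x j)) (g (x j))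
      linarith [hB f hf (x j), hB g hg (x j)])
  rw [continuous_iff_continuousAt]
  intro x0
  rw [ContinuousAt, Metric.tendsto_nhds]
  intro ε hε
  have hall : ∀ᶠ x in nhds x0, ∀ j, ∀ f ∈ F, |f (x j) - f (x0 j)| ≤ ε / 4 := by
    rw [Filter.eventually_all]
    intro j
    exact ((continuous_apply j).tendsto x0).eventually (heq (x0 j) (ε / 4) (by linarith))
  filter_upwards [hall] with x hx
  have hsup : ∀ (f g : Ω → ℝ) (z : Fin m → Ω) (j : Fin m),
      |f (z j) - g (z j)| ≤ ⨆ j, |f (z j) - g (z j)| := fun f g z j =>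
    le_ciSup (f := fun j => |f (z j) - g (z j)|) (Set.finite_range _).bddAbove j
  have h1 := ent_le (fun f g : Ω → ℝ => ⨆ j, |f (x j) - g (x j)|)
    (fun f g : Ω → ℝ => ⨆ j, |f (x0 j) - g (x0 j)|) F n (ε / 2) (by linarith) (by
      intro f hf g hg
      refine ciSup_le fun j => ?_
      have := hsup f g x j
      have a := abs_le.1 (hx j f hf)
      have b := abs_le.1 (hx j g hg)
      have c := abs_le.1 this
      rw [abs_le]; constructor <;> linarith) (hne x)
  have h2 := ent_le (fun f g : Ω → ℝ => ⨆ j, |f (x0 j) - g (x0 j)|)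
    (fun f g : Ω → ℝ => ⨆ j, |f (x j) - g (x j)|) F n (ε / 2) (by linarith) (by
      intro f hf g hg
      refine ciSup_le fun j => ?_
      have := hsup f g x0 j
      have a := abs_le.1 (hx j f hf)
      have b := abs_le.1 (hx j g hg)
      have c := abs_le.1 this
      rw [abs_le]; constructor <;> linarith) (hne x0)
  rw [Real.dist_eq, abs_lt]
  constructor <;> linarith

lemma le_supNorm {Ω : Type*} [TopologicalSpace Ω] [CompactSpace Ω] {f : Ω → ℝ} (hf : Continuous f)
    (y : Ω) : |f y| ≤ supNorm f :=
  le_ciSup (f := fun y => |f y|) (isCompact_range hf.abs).bddAbove y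

lemma cont_integrable {Ω : Type*} [TopologicalSpace Ω] [CompactSpace Ω] [MeasurableSpace Ω]
    [BorelSpace Ω] (μ : Measure Ω) [IsFiniteMeasure μ] {f : Ω → ℝ} (hf : Continuous f) :
    Integrable f μ := by
  obtain ⟨C, hC⟩ := (isCompact_range hf).isBounded.exists_norm_le
  exact Integrable.of_bound hf.aestronglyMeasurable C (.of_forall fun y => hC _ ⟨y, rfl⟩)

lemma nikolskii {Ω : Type*} [TopologicalSpace Ω] [CompactSpace Ω] [MeasurableSpace Ω]
    [BorelSpace Ω] (μ : Measure Ω) [IsFiniteMeasure μ] {f : Ω → ℝ} (hf : Continuous f)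
    {H ps : ℝ} (hH : 1 ≤ H) (hp1 : 1 ≤ ps) (hp2 : ps ≤ 2)
    (h : supNorm f ≤ H * Real.sqrt (∫ y, (f y) ^ 2 ∂μ)) (y : Ω) :
    |f y| ^ ps ≤ H ^ 2 * ∫ z, |f z| ^ ps ∂μ := by
  have hps : 0 < ps := by linarith
  have hI : 0 ≤ ∫ z, |f z| ^ ps ∂μ := integral_nonneg fun z => by positivity
  set s := supNorm f with hs
  have hys : |f y| ≤ s := le_supNorm hf y
  refine (Real.rpow_le_rpow (abs_nonneg _) hys hps.le).trans ?_
  have hs0 : 0 ≤ s := (abs_nonneg _).trans hys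
  rcases hs0.eq_or_lt with h0 | hpos
  · rw [← h0, Real.zero_rpow hps.ne']; positivity
  have hcp : Continuous (fun z => |f z| ^ ps) := hf.abs.rpow_const fun _ => Or.inr hps.le
  have h1 : ∫ z, (f z) ^ 2 ∂μ ≤ s ^ (2 - ps) * ∫ z, |f z| ^ ps ∂μ := by
    rw [← integral_const_mul]
    refine integral_mono (cont_integrable μ (hf.pow 2))
      (cont_integrable μ (continuous_const.mul hcp)) fun z => ?_
    have hz := le_supNorm hf z
    rcases (abs_nonneg (f z)).eq_or_lt with e | e
    · have : f z = 0 := abs_eq_zero.1 e.symm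
      simp [this, Real.zero_rpow hps.ne']
    · have : (f z) ^ 2 = |f z| ^ (2 - ps) * |f z| ^ ps := by
        rw [← Real.rpow_add e, sub_add_cancel, ← sq_abs]; norm_num
      simp only [this]
      have := Real.rpow_le_rpow e.le hz (show 0 ≤ 2 - ps by linarith)
      gcongr
  have h2 : s ^ 2 ≤ H ^ 2 * ∫ z, (f z) ^ 2 ∂μ := by
    have h3 : s ^ 2 ≤ (H * Real.sqrt (∫ y, (f y) ^ 2 ∂μ)) ^ 2 := by gcongr
    rwa [mul_pow, Real.sq_sqrt (integral_nonneg fun z => sq_nonneg _)] at h3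
  have h3 : s ^ 2 = s ^ (2 - ps) * s ^ ps := by
    rw [← Real.rpow_add hpos, sub_add_cancel]; norm_num
  have hsp : 0 < s ^ (2 - ps) := by positivity
  refine le_of_mul_le_mul_left ?_ hsp
  rw [← h3]
  have : H ^ 2 * ∫ z, (f z) ^ 2 ∂μ ≤ H ^ 2 * (s ^ (2 - ps) * ∫ z, |f z| ^ ps ∂μ) := by gcongr
  linarith

end
open MeasureTheory

noncomputable section

section Lux
variable {Ω : Type*} [TopologicalSpace Ω] [CompactSpace Ω] [MeasurableSpace Ω]
    [BorelSpace Ω] (μ : Measure Ω) [IsProbabilityMeasure μ]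

lemma phi_comp_cont {Φ : ℝ → ℝ} (hΦ : IsPhiPrefun Φ) {q : ℝ} (hq : 1 ≤ q) (hd : DecQ Φ q)
    {f : Ω → ℝ} (hf : Continuous f) {lam : ℝ} (hl : 0 < lam) :
    Continuous (fun y => Φ (|f y| / lam)) :=
  (phi_contOn hΦ hq hd).comp_continuous (hf.abs.div_const lam)
    (fun y => div_nonneg (abs_nonneg _) hl.le)

lemma lux_spec {Φ : ℝ → ℝ} (hΦ : IsPhiPrefun Φ) {q : ℝ} (hq : 1 ≤ q) (hd : DecQ Φ q)
    {f : Ω → ℝ} (hf : Continuous f) (h : luxNorm μ Φ f < 1) :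
    ∃ lam, 0 < lam ∧ lam < 1 ∧ ∫ x, Φ (|f x| / lam) ∂μ ≤ 1 := by
  have hne : {lam : ℝ | 0 < lam ∧ ∫ x, Φ (|f x| / lam) ∂μ ≤ 1}.Nonempty := by
    have h1 : ∀ᶠ t in nhdsWithin (0:ℝ) (Set.Ioi 0), Φ t < 1 :=
      hΦ.tendsto_zero.eventually_lt_const (by norm_num)
    obtain ⟨t, ht1, ht0⟩ := (h1.and self_mem_nhdsWithin).exists
    have ht0 : 0 < t := ht0
    obtain ⟨C, hC⟩ := (isCompact_range hf).isBounded.exists_norm_le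
    have hC' : ∀ y, |f y| ≤ |C| + 1 := fun y => by
      have := hC _ ⟨y, rfl⟩
      rw [Real.norm_eq_abs] at this
      linarith [le_abs_self C]
    have hl : 0 < (|C| + 1) / t := by positivity
    refine ⟨(|C| + 1) / t, hl, ?_⟩
    calc ∫ x, Φ (|f x| / ((|C| + 1) / t)) ∂μ ≤ ∫ _x, (1:ℝ) ∂μ := by
          refine integral_mono (cont_integrable μ (phi_comp_cont hΦ hq hd hf hl))
            (integrable_const _) fun x => ?_
          refine le_trans (hΦ.mono (Set.mem_Ici.2 (by positivity)) ht0.le ?_) ht1.le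
          rw [div_le_iff₀ hl, mul_div_cancel₀ _ ht0.ne']
          exact hC' x
      _ = 1 := by simp
  obtain ⟨lam, ⟨h1, h2⟩, h3⟩ := exists_lt_of_csInf_lt hne h
  exact ⟨lam, h1, h3, h2⟩

lemma lux_int {Φ : ℝ → ℝ} (hΦ : IsPhiPrefun Φ) {q : ℝ} (hq : 1 ≤ q) (hd : DecQ Φ q)
    {f : Ω → ℝ} (hf : Continuous f) (h : luxNorm μ Φ f < 1) :
    ∫ x, Φ |f x| ∂μ ≤ 1 := by
  obtain ⟨l, h0, h1, h2⟩ := lux_spec μ hΦ hq hd hf h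
  refine le_trans (integral_mono ?_ (cont_integrable μ (phi_comp_cont hΦ hq hd hf h0)) ?_) h2
  · simpa using cont_integrable μ (phi_comp_cont hΦ hq hd hf one_pos)
  · intro x
    refine hΦ.mono (Set.mem_Ici.2 (by positivity)) (Set.mem_Ici.2 (by positivity)) ?_
    rw [le_div_iff₀ h0]
    nlinarith [abs_nonneg (f x)]

lemma lux_lp {Φ : ℝ → ℝ} (hΦ : IsPhiPrefun Φ) {q ps a : ℝ} (hq : 1 ≤ q) (hd : DecQ Φ q)
    (ha : 1 ≤ a) (hps : 0 < ps) (hi : AIncP Φ ps a)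
    {f : Ω → ℝ} (hf : Continuous f) (h : luxNorm μ Φ f < 1) :
    ∫ x, |f x| ^ ps ∂μ < 1 + a / Φ 1 := by
  obtain ⟨l, h0, h1, h2⟩ := lux_spec μ hΦ hq hd hf h
  have hΦ1 : 0 < Φ 1 := phi_pos hΦ hd one_pos
  have hpt : ∀ t, 0 ≤ t → t ^ ps ≤ 1 + a / Φ 1 * Φ t := by
    intro t ht
    have hn := hΦ.nonneg t ht
    rcases le_or_gt t 1 with hle | hgt
    · have : t ^ ps ≤ 1 := Real.rpow_le_one ht hle hps.le
      have : 0 ≤ a / Φ 1 * Φ t := by positivity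
      linarith
    · have := hi 1 t one_pos hgt
      rw [Real.one_rpow, div_one] at this
      have htp : 0 < t ^ ps := by positivity
      have h3 : t ^ ps ≤ a / Φ 1 * Φ t := by
        rw [div_mul_eq_mul_div, le_div_iff₀ hΦ1]
        rw [← mul_div_assoc, le_div_iff₀ htp] at this
        linarith
      linarith
  have hc := phi_comp_cont hΦ hq hd hf h0
  have hcp : Continuous (fun z => (|f z| / l) ^ ps) :=
    (hf.abs.div_const l).rpow_const fun _ => Or.inr hps.le
  have h3 : ∫ x, (|f x| / l) ^ ps ∂μ ≤ 1 + a / Φ 1 := by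
    calc ∫ x, (|f x| / l) ^ ps ∂μ ≤ ∫ x, (1 + a / Φ 1 * Φ (|f x| / l)) ∂μ := by
          refine integral_mono (cont_integrable μ hcp)
            (cont_integrable μ (continuous_const.add (continuous_const.mul hc))) fun x => ?_
          exact hpt _ (by positivity)
      _ = 1 + a / Φ 1 * ∫ x, Φ (|f x| / l) ∂μ := by
          rw [integral_add (integrable_const _) ((cont_integrable μ hc).const_mul _),
            integral_const_mul]
          simp
      _ ≤ 1 + a / Φ 1 * 1 := by gcongr
      _ = _ := by ring
  have h4 : ∫ x, |f x| ^ ps ∂μ = l ^ ps * ∫ x, (|f x| / l) ^ ps ∂μ := by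
    rw [← integral_const_mul]
    congr 1
    ext x
    rw [← Real.mul_rpow h0.le (by positivity), mul_div_cancel₀ _ h0.ne']
  rw [h4]
  have hl : l ^ ps < 1 := Real.rpow_lt_one h0.le h1 hps
  have hlp : 0 < l ^ ps := by positivity
  have : 0 < 1 + a / Φ 1 := by positivity
  calc l ^ ps * ∫ x, (|f x| / l) ^ ps ∂μ ≤ l ^ ps * (1 + a / Φ 1) := by gcongr
    _ < _ := by nlinarith

lemma lux_zero {Φ : ℝ → ℝ} (hΦ : IsPhiPrefun Φ) : luxNorm μ Φ (0 : Ω → ℝ) < 1 := by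
  refine lt_of_le_of_lt (csInf_le ⟨0, fun x hx => hx.1.le⟩
    (show (1/2 : ℝ) ∈ _ from ⟨by norm_num, ?_⟩)) (by norm_num : (1/2:ℝ) < 1)
  simp [hΦ.map_zero]

end Lux

lemma tendsto_eta (w e : ℕ → ℝ) (α : ℝ) (hα : 0 ≤ α) (s : Finset ℕ) :
    Filter.Tendsto (fun η : ℝ => ∑ n ∈ s, w n * (e n + η) ^ α) (nhdsWithin 0 (Set.Ioi 0))
      (nhds (∑ n ∈ s, w n * e n ^ α)) := by
  have hc : Continuous (fun η : ℝ => ∑ n ∈ s, w n * (e n + η) ^ α) := by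
    refine continuous_finsetSum _ fun n _ => ?_
    refine continuous_const.mul ?_
    exact (continuous_const.add continuous_id).rpow_const fun _ => Or.inr hα
  have := (hc.tendsto 0).mono_left (nhdsWithin_le_nhds (s := Set.Ioi 0))
  simpa using this

lemma fixed_sample {Ω : Type*} [TopologicalSpace Ω] [CompactSpace Ω] [MeasurableSpace Ω]
    [BorelSpace Ω] (μ : Measure Ω) [IsProbabilityMeasure μ]
    {Φ : ℝ → ℝ} (hΦ : IsPhiPrefun Φ) {q ps a H : ℝ} (hq : 1 ≤ q) (hd : DecQ Φ q)
    (ha : 1 ≤ a) (hps1 : 1 ≤ ps) (hps2 : ps ≤ 2) (hi : AIncP Φ ps a) (hH : 1 ≤ H)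
    (N : ℕ) (hN1 : 1 ≤ N) (X : Submodule ℝ (Ω → ℝ)) (hX : ∀ f ∈ X, Continuous f)
    (hN : Module.finrank ℝ X = N)
    (hNI : ∀ f ∈ X, supNorm f ≤ H * Real.sqrt (∫ y, (f y) ^ 2 ∂μ))
    (m : ℕ) (hm : 1 ≤ m) (x : Fin m → Ω) (M : ℝ)
    (hM : M = (1 + a / Φ 1) ^ (1 / ps) * H ^ (2 / ps))
    (hfM : ∀ f ∈ X, luxNorm μ Φ f < 1 → ∀ y, |f y| ≤ M)
    (F : Set (Ω → ℝ)) (hFdef : F = {f : Ω → ℝ | f ∈ X ∧ (∫ y, |f y| ^ ps ∂μ) ^ (1 / ps) < 1})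
    (BF : ℝ) (hBF0 : 0 ≤ BF) (hBF : ∀ f ∈ F, ∀ y, |f y| ≤ BF)
    (w : ℝ) (hw : ∀ f ∈ X, luxNorm μ Φ f < 1 → (∑ j, Φ |f (x j)|) / (m : ℝ) ≤ w) :
    rav (fun s => ⨆ i : {f : Ω → ℝ // f ∈ X ∧ luxNorm μ Φ f < 1},
        |(∑ j, sgnB (s j) * Φ |i.1 (x j)|) / (m : ℝ)|) ≤
      400 * Real.sqrt (2 * (1 / (m:ℝ) * q ^ 2 * a * (Φ M / H ^ 2)) * w) *
        ∑ n ∈ Finset.range (Nat.log 2 N + 1), (2 : ℝ) ^ ((n : ℝ) / 2) *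
          (entropyNumD (fun f g : Ω → ℝ => ⨆ j, |f (x j) - g (x j)|) F n) ^ (ps / 2) := by
  classical
  have hps : 0 < ps := by linarith
  have hm0 : (0:ℝ) < m := by exact_mod_cast hm
  have hH0 : 0 < H := by linarith
  have hΦ1 : 0 < Φ 1 := phi_pos hΦ hd one_pos
  have : FiniteDimensional ℝ X := FiniteDimensional.of_finrank_pos (by omega)
  set R := (1 + a / Φ 1) ^ (1 / ps) with hR
  have hbase : 0 < 1 + a / Φ 1 := by positivity
  have hRpos : 0 < R := by positivity
  have hRps : R ^ ps = 1 + a / Φ 1 := by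
    rw [hR, ← Real.rpow_mul hbase.le, one_div_mul_cancel hps.ne', Real.rpow_one]
  have hMpos : 0 < M := by rw [hM]; positivity
  have hMps : M ^ ps = R ^ ps * H ^ 2 := by
    rw [hM, Real.mul_rpow hRpos.le (by positivity), ← Real.rpow_mul hH0.le,
      div_mul_cancel₀ _ hps.ne']
    norm_num
  have hΦM : 0 ≤ Φ M := hΦ.nonneg M hMpos.le
  have hw0 : 0 ≤ w := by
    refine le_trans ?_ (hw 0 X.zero_mem (lux_zero μ hΦ))
    simp [hΦ.map_zero]
  let ι := {f : Ω → ℝ // f ∈ X ∧ luxNorm μ Φ f < 1}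
  have : Nonempty ι := ⟨⟨0, X.zero_mem, lux_zero μ hΦ⟩⟩
  let ev : (Ω → ℝ) →ₗ[ℝ] (Fin m → ℝ) := LinearMap.funLeft ℝ ℝ x
  have hev : ∀ f, ev f = fun j => f (x j) := fun f => rfl
  set K : Set (Fin m → ℝ) := ev '' F with hK
  set S : Set (Fin m → ℝ) := ev '' {f | f ∈ X ∧ luxNorm μ Φ f < 1} with hS
  set φ : (Fin m → ℝ) → (Fin m → ℝ) := fun v j => Φ |v j| with hφ
  set D := Real.sqrt (q ^ 2 * (a * (Φ M / M ^ ps)) * (2 * (m * w))) with hD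
  have hD2 : D ^ 2 = q ^ 2 * (a * (Φ M / M ^ ps)) * (2 * (m * w)) := Real.sq_sqrt (by positivity)
  have h0F : (0 : Ω → ℝ) ∈ F := by
    rw [hFdef]
    refine ⟨X.zero_mem, ?_⟩
    simp [Real.zero_rpow hps.ne', Real.zero_rpow (inv_pos.2 hps).ne']
  have hinc : ∀ u ∈ S, ∀ v ∈ S, ∑ j, (φ u j - φ v j) ^ 2 ≤ (D * ‖u - v‖ ^ (ps / 2)) ^ 2 := by
    rintro _ ⟨f, ⟨hf1, hf2⟩, rfl⟩ _ ⟨g, ⟨hg1, hg2⟩, rfl⟩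
    have e : (‖ev f - ev g‖ ^ (ps / 2)) ^ 2 = ‖ev f - ev g‖ ^ ps := by
      rw [← Real.rpow_natCast, ← Real.rpow_mul (norm_nonneg _)]
      congr 1; push_cast; ring
    rw [mul_pow, e, hD2]
    have h1 : ∀ j, (φ (ev f) j - φ (ev g) j) ^ 2 ≤
        q ^ 2 * (a * (Φ M / M ^ ps)) * (Φ |f (x j)| + Φ |g (x j)|) * ‖ev f - ev g‖ ^ ps := by
      intro j
      refine (phi_sq hΦ hq hd ha hps hps2 hi (abs_nonneg (g (x j))) (hfM g hg1 hg2 _)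
        (abs_nonneg (f (x j))) (hfM f hf1 hf2 _)).trans ?_
      have h2 : |(|f (x j)| - |g (x j)|)| ≤ ‖ev f - ev g‖ :=
        (abs_abs_sub_abs_le_abs_sub _ _).trans (norm_le_pi_norm (ev f - ev g) j)
      have h3 := hΦ.nonneg _ (abs_nonneg (f (x j)))
      have h4 := hΦ.nonneg _ (abs_nonneg (g (x j)))
      gcongr
    refine (Finset.sum_le_sum fun j _ => h1 j).trans ?_
    rw [← Finset.sum_mul, ← Finset.mul_sum, Finset.sum_add_distrib]
    have h2 := hw f hf1 hf2
    have h3 := hw g hg1 hg2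
    rw [div_le_iff₀ hm0] at h2 h3
    gcongr
    linarith
  have hSK : ∀ v ∈ S, ∃ w ∈ K, v = R • w := by
    rintro _ ⟨f, ⟨hf1, hf2⟩, rfl⟩
    refine ⟨ev (R⁻¹ • f), ⟨R⁻¹ • f, ?_, rfl⟩, ?_⟩
    · rw [hFdef]
      refine ⟨X.smul_mem _ hf1, ?_⟩
      refine Real.rpow_lt_one (integral_nonneg fun _ => by positivity) ?_ (by positivity)
      have h1 := lux_lp μ hΦ hq hd ha hps hi (hX f hf1) hf2
      have h2 : ∀ y, |(R⁻¹ • f) y| ^ ps = (R ^ ps)⁻¹ * |f y| ^ ps := by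
        intro y
        rw [Pi.smul_apply, smul_eq_mul, abs_mul, Real.mul_rpow (abs_nonneg _) (abs_nonneg _),
          abs_of_pos (inv_pos.2 hRpos), Real.inv_rpow hRpos.le]
      simp_rw [h2]
      rw [integral_const_mul, hRps, inv_mul_lt_iff₀ hbase, mul_one]
      exact h1
    · rw [map_smul, smul_smul, mul_inv_cancel₀ hRpos.ne', one_smul]
  set e : ℕ → ℝ := fun n =>
    entropyNumD (fun f g : Ω → ℝ => ⨆ j, |f (x j) - g (x j)|) F n with he
  have he0 : ∀ n, 0 ≤ e n := fun n => ent_nonneg _ _ _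
  have hjn : Nonempty (Fin m) := ⟨⟨0, hm⟩⟩
  have hmain : ∀ η : ℝ, 0 < η → rav (fun s => ⨆ v : S, |∑ j, sgnB (s j) * φ v j|) ≤
      400 * D * R ^ (ps / 2) * ∑ n ∈ Finset.range (Nat.log 2 N + 1),
        (2 : ℝ) ^ ((n : ℝ) / 2) * (e n + η) ^ (ps / 2) := by
    intro η hη
    refine sample_bound N hN1 (X.map ev) ((Submodule.finrank_map_le _ _).trans hN.le) K S ?_ ?_ R
      hRpos hSK φ ?_ ?_ D (ps / 2) (Real.sqrt_nonneg _) (by linarith) (by linarith) hinc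
      (fun n => e n + η) (fun n => by have := he0 n; positivity) ?_
    · rintro _ ⟨f, hf, rfl⟩
      rw [hFdef] at hf
      exact ⟨f, hf.1, rfl⟩
    · exact ⟨0, h0F, map_zero _⟩
    · exact ⟨0, ⟨X.zero_mem, lux_zero μ hΦ⟩, map_zero _⟩
    · ext j; simp [hφ, hΦ.map_zero]
    · intro n
      have hne := ent_set_nonempty
        (fun f g : Ω → ℝ => ⨆ j, |f (x j) - g (x j)|) F n (2 * BF) (by linarith) ⟨0, h0F⟩ (by
          intro f hf g hg
          refine ciSup_le fun j => ?_
          have := abs_sub (f (x j)) (g (x j))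
          linarith [hBF f hf (x j), hBF g hg (x j)])
      obtain ⟨ε, ⟨h1, T, h2, h3, h4⟩, h5⟩ := exists_lt_of_csInf_lt hne
        (show e n < e n + η by linarith)
      refine ⟨T.image ev, ?_, Finset.card_image_le.trans h3, ?_⟩
      · rw [Finset.coe_image]; exact Set.image_mono h2
      · rintro _ ⟨f, hf, rfl⟩
        obtain ⟨g, hg, h6⟩ := h4 f hf
        refine ⟨ev g, Finset.mem_image_of_mem _ hg, ?_⟩
        rw [iSup_eq_norm hm] at h6
        exact (h6.trans h5).le
  have hlim := (tendsto_eta (fun n => (2 : ℝ) ^ ((n : ℝ) / 2)) e (ps / 2) (by linarith)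
    (Finset.range (Nat.log 2 N + 1))).const_mul (400 * D * R ^ (ps / 2))
  have hfin := ge_of_tendsto hlim (by
    filter_upwards [self_mem_nhdsWithin] with η hη using hmain η hη)
  have hbd : ∀ s : Fin m → Bool, BddAbove (Set.range fun v : S => |∑ j, sgnB (s j) * φ v j|) := by
    intro s
    refine ⟨∑ _j : Fin m, Φ M, ?_⟩
    rintro _ ⟨⟨_, ⟨f, ⟨hf1, hf2⟩, rfl⟩⟩, rfl⟩
    refine (Finset.abs_sum_le_sum_abs _ _).trans (Finset.sum_le_sum fun j _ => ?_)
    rw [abs_mul, sgnB_abs, one_mul]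
    simp only [hφ]
    rw [abs_of_nonneg (hΦ.nonneg _ (abs_nonneg _))]
    exact hΦ.mono (Set.mem_Ici.2 (abs_nonneg _)) hMpos.le (hfM f hf1 hf2 _)
  have hcmp : ∀ s : Fin m → Bool, (⨆ i : ι, |(∑ j, sgnB (s j) * Φ |i.1 (x j)|) / (m : ℝ)|) ≤
      (1 / (m:ℝ)) * ⨆ v : S, |∑ j, sgnB (s j) * φ v j| := by
    intro s
    refine ciSup_le fun i => ?_
    rw [abs_div, abs_of_pos hm0, div_eq_inv_mul, one_div]
    gcongr
    exact le_ciSup (hbd s) ⟨ev i.1, ⟨i.1, i.2, rfl⟩⟩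
  refine (rav_mono hcmp).trans ?_
  rw [rav_mul_left]
  set G := ∑ n ∈ Finset.range (Nat.log 2 N + 1), (2 : ℝ) ^ ((n : ℝ) / 2) * e n ^ (ps / 2) with hG
  have hG0 : 0 ≤ G := Finset.sum_nonneg fun n _ => by have := he0 n; positivity
  have hkey : 1 / (m:ℝ) * (D * R ^ (ps / 2)) =
      Real.sqrt (2 * (1 / (m:ℝ) * q ^ 2 * a * (Φ M / H ^ 2)) * w) := by
    symm
    rw [Real.sqrt_eq_iff_mul_self_eq (by positivity) (by positivity), ← sq, mul_pow, mul_pow, hD2,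
      hMps]
    have : (R ^ (ps / 2)) ^ 2 = R ^ ps := by
      rw [← Real.rpow_natCast, ← Real.rpow_mul hRpos.le]
      congr 1; push_cast; ring
    rw [this]
    have : 0 < R ^ ps := by positivity
    field_simp
  calc 1 / (m:ℝ) * rav (fun s => ⨆ v : S, |∑ j, sgnB (s j) * φ v j|)
      ≤ 1 / (m:ℝ) * (400 * D * R ^ (ps / 2) * G) := by gcongr
    _ = 400 * (1 / (m:ℝ) * (D * R ^ (ps / 2))) * G := by ring
    _ = _ := by rw [hkey]

end
open MeasureTheory
noncomputable section

lemma case_alg (E A : ℝ) (hA : 0 ≤ A)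
    (h : ∀ θ : ℝ, 0 < θ → θ ≤ 1 → E ≤ θ / 2 * (1 + E) + 640000 * A / θ) :
    E ≤ 1280001 * (A + Real.sqrt A) := by
  have hs := Real.sqrt_nonneg A
  rcases le_or_gt E 0 with hE | hE
  · have : 0 ≤ A + Real.sqrt A := by positivity
    linarith
  rcases le_or_gt 1 A with h1 | h1
  · have := h 1 one_pos le_rfl
    linarith
  rcases hA.eq_or_lt with h0 | h0
  · exfalso
    have := h (min 1 (E / 2)) (by positivity) (min_le_left _ _)
    rw [← h0] at this
    have h2 : min 1 (E / 2) ≤ 1 := min_le_left _ _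
    have h3 : min 1 (E / 2) ≤ E / 2 := min_le_right _ _
    simp only [mul_zero, zero_div, add_zero] at this
    nlinarith
  · have hr : 0 < Real.sqrt A := Real.sqrt_pos.2 h0
    have hr1 : Real.sqrt A ≤ 1 := by
      rw [Real.sqrt_le_one]; exact h1.le
    have := h _ hr hr1
    rw [mul_div_assoc, Real.div_sqrt] at this
    nlinarith

lemma am_gm_aux (κ S G θ : ℝ) (hκ : 0 ≤ κ) (hS : 0 ≤ S) (hθ : 0 < θ) :
    2 * (400 * Real.sqrt (2 * κ * (1 + S)) * G) ≤
      θ / 2 * (1 + S) + 640000 * (κ * G ^ 2) / θ := by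
  set r := Real.sqrt (2 * κ * (1 + S)) with hr
  have h2 : r = Real.sqrt (2 * κ) * Real.sqrt (1 + S) := Real.sqrt_mul (by positivity) _
  set a := Real.sqrt (2 * κ) with ha
  set b := Real.sqrt (1 + S) with hb
  have ha2 : a ^ 2 = 2 * κ := Real.sq_sqrt (by positivity)
  have hb2 : b ^ 2 = 1 + S := Real.sq_sqrt (by positivity)
  rw [← hb2, show κ = a ^ 2 / 2 by linarith, h2]
  rw [← sub_nonneg]
  have : θ / 2 * b ^ 2 + 640000 * (a ^ 2 / 2 * G ^ 2) / θ - 2 * (400 * (a * b) * G) =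
      (θ * b - 800 * a * G) ^ 2 / (2 * θ) := by
    field_simp; ring
  rw [this]; positivity

lemma main_bound {Ω : Type*} [MetricSpace Ω] [CompactSpace Ω] [MeasurableSpace Ω]
    [BorelSpace Ω] (μ : Measure Ω) [IsProbabilityMeasure μ]
    {Φ : ℝ → ℝ} (hΦ : IsPhiPrefun Φ) {q ps a H : ℝ} (hq : 1 ≤ q) (hd : DecQ Φ q)
    (ha : 1 ≤ a) (hps1 : 1 ≤ ps) (hps2 : ps ≤ 2) (hi : AIncP Φ ps a) (hH : 1 ≤ H)
    (N : ℕ) (hN1 : 1 ≤ N) (X : Submodule ℝ (Ω → ℝ)) (hX : ∀ f ∈ X, Continuous f)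
    (hN : Module.finrank ℝ X = N)
    (hNI : ∀ f ∈ X, supNorm f ≤ H * Real.sqrt (∫ y, (f y) ^ 2 ∂μ))
    (m : ℕ) (hm : 1 ≤ m) (A : ℝ)
    (hA : A = (1 / (m : ℝ)) * q ^ 2 * a *
            (Φ ((1 + a / Φ 1) ^ (1 / ps) * H ^ (2 / ps)) / H ^ 2) *
            (∫ x : Fin m → Ω,
              (∑ n ∈ Finset.range (Nat.log 2 N + 1),
                (2 : ℝ) ^ ((n : ℝ) / 2) *
                  (entropyNumD (fun f g : Ω → ℝ => ⨆ j, |f (x j) - g (x j)|)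
                      {f : Ω → ℝ | f ∈ X ∧ (∫ y, |f y| ^ ps ∂μ) ^ (1 / ps) < 1}
                      n) ^ (ps / 2)) ^ 2
              ∂(Measure.pi fun _ : Fin m => μ))) :
    (∫ x : Fin m → Ω,
            sSup {v : ℝ | ∃ f ∈ X, luxNorm μ Φ f < 1 ∧
              v = |(∑ j, Φ (|f (x j)|)) / (m : ℝ) - ∫ y, Φ (|f y|) ∂μ|}
            ∂(Measure.pi fun _ : Fin m => μ)) ≤
          1280001 * (A + Real.sqrt A) := by
  have hps : 0 < ps := by linarith
  have hH0 : 0 < H := by linarith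
  have hΦ1 : 0 < Φ 1 := phi_pos hΦ hd one_pos
  have hm' : (0:ℝ) < m := by exact_mod_cast hm
  have hfd : FiniteDimensional ℝ X := FiniteDimensional.of_finrank_pos (by omega)
  set ν := Measure.pi fun _ : Fin m => μ with hν
  set F : Set (Ω → ℝ) := {f : Ω → ℝ | f ∈ X ∧ (∫ y, |f y| ^ ps ∂μ) ^ (1 / ps) < 1} with hFdef
  set M := (1 + a / Φ 1) ^ (1 / ps) * H ^ (2 / ps) with hM
  have hR0 : 0 ≤ 1 + a / Φ 1 := by positivity
  have hM0 : 0 ≤ M := by positivity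
  have hBp : (H ^ (2 / ps)) ^ ps = H ^ 2 := by
    rw [← Real.rpow_mul hH0.le, div_mul_cancel₀ _ hps.ne']; norm_num
  have hMp : M ^ ps = (1 + a / Φ 1) * H ^ 2 := by
    rw [hM, Real.mul_rpow (by positivity) (by positivity), hBp, ← Real.rpow_mul hR0,
      div_mul_cancel₀ _ hps.ne', Real.rpow_one]
  have hfM : ∀ f ∈ X, luxNorm μ Φ f < 1 → ∀ y, |f y| ≤ M := by
    intro f hf hl y
    have h1 := nikolskii μ (hX f hf) hH hps1 hps2 (hNI f hf) y
    have h2 := lux_lp μ hΦ hq hd ha hps hi (hX f hf) hl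
    rw [← Real.rpow_le_rpow_iff (abs_nonneg _) hM0 hps, hMp]
    nlinarith [sq_nonneg H]
  have hBF0 : 0 ≤ H ^ (2 / ps) := by positivity
  have hBF : ∀ f ∈ F, ∀ y, |f y| ≤ H ^ (2 / ps) := by
    rintro f ⟨hf, hl⟩ y
    have h1 := nikolskii μ (hX f hf) hH hps1 hps2 (hNI f hf) y
    have hI : 0 ≤ ∫ z, |f z| ^ ps ∂μ := integral_nonneg fun z => by positivity
    have h2 : ∫ z, |f z| ^ ps ∂μ ≤ 1 := by
      by_contra hc
      push Not at hc
      have := Real.one_le_rpow hc.le (show 0 ≤ 1 / ps by positivity)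
      linarith
    rw [← Real.rpow_le_rpow_iff (abs_nonneg _) hBF0 hps, hBp]
    nlinarith [sq_nonneg H]
  have h0F : F.Nonempty := by
    refine ⟨0, X.zero_mem, ?_⟩
    simp [Real.zero_rpow hps.ne', Real.zero_rpow (inv_pos.2 hps).ne']
  let ι := {f : Ω → ℝ // f ∈ X ∧ luxNorm μ Φ f < 1}
  have hne : Nonempty ι := ⟨⟨0, X.zero_mem, lux_zero μ hΦ⟩⟩
  let g : ι → Ω → ℝ := fun i y => Φ |i.1 y|
  have hg : ∀ i, Continuous (g i) := fun i => by
    simpa using phi_comp_cont hΦ hq hd (hX i.1 i.2.1) one_pos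
  have hgB : ∀ i y, |g i y| ≤ Φ M := fun i y => by
    rw [abs_of_nonneg (hΦ.nonneg _ (abs_nonneg _))]
    exact hΦ.mono (Set.mem_Ici.2 (abs_nonneg _)) (Set.mem_Ici.2 hM0) (hfM _ i.2.1 i.2.2 y)
  let D : ι → (Fin m → Ω) → ℝ := fun i x => (∑ j, g i (x j)) / (m : ℝ) - ∫ y, g i y ∂μ
  let S : (Fin m → Ω) → ℝ := fun x => ⨆ i, |D i x|
  have hD : ∀ i, Continuous (D i) := fun i =>
    ((continuous_finsetSum _ fun j _ => (hg i).comp (continuous_apply j)).div_const _).sub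
      continuous_const
  have hDB : ∀ i x, |D i x| ≤ 2 * Φ M := fun i x => by
    have h1 := avg_bd hm (fun j => g i (x j)) (Φ M) (fun j => hgB i _)
    have h2 : |∫ y, g i y ∂μ| ≤ Φ M := by
      have := norm_integral_le_of_norm_le_const (μ := μ) (f := g i) (C := Φ M)
        (.of_forall fun y => hgB i y)
      simpa using this
    have := abs_sub ((∑ j, g i (x j)) / (m : ℝ)) (∫ y, g i y ∂μ)
    show |(∑ j, g i (x j)) / (m : ℝ) - ∫ y, g i y ∂μ| ≤ _
    linarith
  have hS0 : ∀ x, 0 ≤ S x := fun x => Real.iSup_nonneg fun i => abs_nonneg _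
  have hSint : Integrable S ν := sup_int D hD (2 * Φ M) hDB ν
  have hSeq : ∀ x : Fin m → Ω, sSup {v : ℝ | ∃ f ∈ X, luxNorm μ Φ f < 1 ∧
      v = |(∑ j, Φ (|f (x j)|)) / (m : ℝ) - ∫ y, Φ (|f y|) ∂μ|} = S x := by
    intro x
    show _ = sSup (Set.range fun i => |D i x|)
    congr 1
    ext v
    constructor
    · rintro ⟨f, h1, h2, rfl⟩
      exact ⟨⟨f, h1, h2⟩, rfl⟩
    · rintro ⟨i, rfl⟩
      exact ⟨i.1, i.2.1, i.2.2, rfl⟩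
  simp_rw [hSeq]
  let G : (Fin m → Ω) → ℝ := fun x => ∑ n ∈ Finset.range (Nat.log 2 N + 1),
    (2 : ℝ) ^ ((n : ℝ) / 2) *
      (entropyNumD (fun f g : Ω → ℝ => ⨆ j, |f (x j) - g (x j)|) F n) ^ (ps / 2)
  have hGc : Continuous G := by
    refine continuous_finsetSum _ fun n _ => continuous_const.mul ?_
    refine (ent_cont hm F h0F _ hBF0 hBF ?_ n).rpow_const fun _ => Or.inr (by positivity)
    intro y0 δ hδ
    filter_upwards [equicont_of_finite X hX (H ^ (2 / ps)) y0 δ hδ] with y hy f hf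
    exact hy f hf.1 (hBF f hf)
  have hG2 : Integrable (fun x => G x ^ 2) ν := cont_integrable ν (hGc.pow 2)
  set κ := (1 / (m : ℝ)) * q ^ 2 * a * (Φ M / H ^ 2) with hκ
  have hκ0 : 0 ≤ κ := by
    have := hΦ.nonneg M hM0
    positivity
  have hA' : A = κ * ∫ x, G x ^ 2 ∂ν := hA
  have hA0 : 0 ≤ A := by
    rw [hA']
    exact mul_nonneg hκ0 (integral_nonneg fun x => sq_nonneg _)
  refine case_alg _ A hA0 fun θ hθ _ => ?_
  have hsym := symmetrization μ g hg (Φ M) hgB m hm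
  refine hsym.trans ?_
  rw [← integral_const_mul]
  have hRint : Integrable (fun x => θ / 2 * (1 + S x) + 640000 / θ * κ * G x ^ 2) ν :=
    (((integrable_const 1).add hSint).const_mul _).add (hG2.const_mul _)
  have hval : ∫ x, (θ / 2 * (1 + S x) + 640000 / θ * κ * G x ^ 2) ∂ν =
      θ / 2 * (1 + ∫ x, S x ∂ν) + 640000 * A / θ := by
    have i1 : Integrable (fun x => 1 + S x) ν := (integrable_const 1).add hSint
    have i2 : Integrable (fun x => θ / 2 * (1 + S x)) ν := i1.const_mul _
    have i3 : Integrable (fun x => 640000 / θ * κ * G x ^ 2) ν := hG2.const_mul _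
    rw [integral_add i2 i3, integral_const_mul, integral_const_mul,
      integral_add (integrable_const 1) hSint, hA']
    have i4 : ∫ _ : Fin m → Ω, (1 : ℝ) ∂ν = 1 := by simp
    rw [i4]
    ring
  rw [← hval]
  refine integral_mono_of_nonneg (.of_forall fun x => ?_) hRint (.of_forall fun x => ?_)
  · refine mul_nonneg (by norm_num) ?_
    have := rav_mono (F := fun _ : Fin m → Bool => (0:ℝ))
      (G := fun s => ⨆ i, |(∑ j, sgnB (s j) * g i (x j)) / (m : ℝ)|)
      (fun s => Real.iSup_nonneg fun i => abs_nonneg _)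
    rwa [rav_const] at this
  · have hw : ∀ f ∈ X, luxNorm μ Φ f < 1 → (∑ j, Φ |f (x j)|) / (m : ℝ) ≤ 1 + S x := by
      intro f hf hl
      have h1 : |D ⟨f, hf, hl⟩ x| ≤ S x := le_ciSup (sup_bdd D _ hDB x) _
      have h2 := lux_int μ hΦ hq hd (hX f hf) hl
      have h3 : (∑ j, Φ |f (x j)|) / (m : ℝ) - ∫ y, Φ |f y| ∂μ ≤ S x := (le_abs_self _).trans h1
      linarith
    have hfs := fixed_sample μ hΦ hq hd ha hps1 hps2 hi hH N hN1 X hX hN hNI m hm x M hM hfM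
      F hFdef _ hBF0 hBF (1 + S x) hw
    have h4 := am_gm_aux κ (S x) (G x) θ hκ0 (hS0 x) hθ
    refine (mul_le_mul_of_nonneg_left hfs (by norm_num)).trans (h4.trans (le_of_eq ?_))
    ring

end
/-- Proposition cor-key. With `p_* = min{p,2}`, `R_Φ(p_*) =
(1 + a_Φ(p_*)/Φ(1))^{1/p_*}`, there is a numerical constant `c > 0` such that for every
Φ-function `Φ ∈ (aInc)_p ∩ (Dec)_q` and every `N`-dimensional subspace `X_N ∈ NI_{2,∞}(H)`,
for i.i.d. points `x₁,…,x_m ∼ μ`,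
`E(sup_{f ∈ X_N^Φ} |(1/m) Σ_j Φ(|f(x_j)|) − ∫ Φ(|f|) dμ|) ≤ c (A + √A)` where
`A = (1/m) q² a_Φ(p_*) (Φ(R_Φ(p_*) H^{2/p_*})/H²) ·
E((Σ_{n ≤ ⌊log₂ N⌋} 2^{n/2} e_n(X_N^{p_*}, ‖·‖_{∞,x})^{p_*/2})²)`. -/
theorem statement7 :
    ∃ c : ℝ, 0 < c ∧
      ∀ p q : ℝ, 1 ≤ p → p ≤ q →
      ∀ N : ℕ, 1 ≤ N → ∀ H : ℝ, 1 ≤ H →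
      ∀ (Ω : Type) [MetricSpace Ω] [CompactSpace Ω] [MeasurableSpace Ω] [BorelSpace Ω],
      ∀ (μ : Measure Ω) [IsProbabilityMeasure μ],
      ∀ Φ : ℝ → ℝ, IsPhiPrefun Φ → (∃ a : ℝ, 1 ≤ a ∧ AIncP Φ 1 a) →
      ∀ aP aPs : ℝ, 1 ≤ aP → AIncP Φ p aP → 1 ≤ aPs → AIncP Φ (min p 2) aPs →
        DecQ Φ q →
      ∀ X : Submodule ℝ (Ω → ℝ),
        (∀ f ∈ X, Continuous f) →
        Module.finrank ℝ X = N →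
        (∀ f ∈ X, supNorm f ≤ H * Real.sqrt (∫ y, (f y) ^ 2 ∂μ)) →
      ∀ m : ℕ, 1 ≤ m →
      ∀ A : ℝ,
        A = (1 / (m : ℝ)) * q ^ 2 * aPs *
            (Φ ((1 + aPs / Φ 1) ^ (1 / min p 2) * H ^ (2 / min p 2)) / H ^ 2) *
            (∫ x : Fin m → Ω,
              (∑ n ∈ Finset.range (Nat.log 2 N + 1),
                (2 : ℝ) ^ ((n : ℝ) / 2) *
                  (entropyNumD (fun f g : Ω → ℝ => ⨆ j, |f (x j) - g (x j)|)
                      {f : Ω → ℝ | f ∈ X ∧ (∫ y, |f y| ^ min p 2 ∂μ) ^ (1 / min p 2) < 1}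
                      n) ^ (min p 2 / 2)) ^ 2
              ∂(Measure.pi fun _ : Fin m => μ)) →
        (∫ x : Fin m → Ω,
            sSup {v : ℝ | ∃ f ∈ X, luxNorm μ Φ f < 1 ∧
              v = |(∑ j, Φ (|f (x j)|)) / (m : ℝ) - ∫ y, Φ (|f y|) ∂μ|}
            ∂(Measure.pi fun _ : Fin m => μ)) ≤
          c * (A + Real.sqrt A) := by
  refine ⟨1280001, by norm_num, ?_⟩
  intro p q hp hpq N hN1 H hH Ω _ _ _ _ μ _ Φ hΦ _ aP aPs _ _ haPs hi hd X hX hN hNI m hm A hA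
  exact main_bound μ hΦ (hp.trans hpq) hd haPs (le_min hp (by norm_num)) (min_le_right _ _) hi hH N
    hN1 X hX hN hNI m hm A hA
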